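/- Let N ≥ 1 and let λ_1 > μ_1 > λ_2 > μ_2 > … > λ_N > μ_N > 0 be real numbers. Then the set of all c ∈ h^{1/2} such that Γ_c has rank N with positive singular values exactly λ_1, …, λ_N, each simple, and Γ̃_c has rank N with positive singular values exactly μ_1, …, μ_N, each simple, endowed with the topology induced by the h^{1/2} norm, is homeomorphic to the 2N-dimensional torus 𝕋^{2N}, where 𝕋 := ℝ/2πℤ. -/

import Mathlib

open scoped InnerProductSpace ComplexConjugate ENNReal

noncomputable section

/-- The Hilbert space `ℓ²(ℕ, ℂ)`. -/
abbrev L2 : Type := lp (fun _ : ℕ => ℂ) 2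

/-- Membership in the space `h^{1/2}`: `c ∈ ℓ²` and `Σ n |c_n|² < ∞`. -/
def InH12 (c : ℕ → ℂ) : Prop :=
  Memℓp c 2 ∧ Summable (fun n : ℕ => (n : ℝ) * ‖c n‖ ^ 2)

/-- `Γ` is the Hankel operator of symbol `c`: `(Γ x)_n = Σ_p c_{n+p} x_p`. -/
def IsHankelOp (c : ℕ → ℂ) (Γ : L2 →L[ℂ] L2) : Prop :=
  ∀ x : L2, ∀ n : ℕ, (Γ x : ℕ → ℂ) n = ∑' p : ℕ, c (n + p) * (x : ℕ → ℂ) p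

/-- The shifted sequence `c̃ : n ↦ c_{n+1}`. -/
def shiftSeq (c : ℕ → ℂ) : ℕ → ℂ := fun n => c (n + 1)

/-- The operator `Γ Γ*`. -/
def opT (Γ : L2 →L[ℂ] L2) : L2 →L[ℂ] L2 :=
  Γ ∘L ContinuousLinearMap.adjoint Γ

/-- `e₀ = (1,0,0,…) ∈ ℓ²`. -/
def e0 : L2 := lp.single 2 0 1

/-- Generic min–max value `a_j` (for `j ≥ 1`) of a bounded operator `T` on a Hilbert space:
the infimum over subspaces `F` of dimension at most `j-1` of the supremum of `Re ⟨T h, h⟩`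
over unit vectors `h` orthogonal to `F`. -/
def minmaxVal {H : Type*} [NormedAddCommGroup H] [InnerProductSpace ℂ H]
    (T : H →L[ℂ] H) (j : ℕ) : ℝ :=
  ⨅ F : {F : Submodule ℂ H // Module.finrank ℂ F ≤ j - 1},
    ⨆ h : {h : H // ‖h‖ = 1 ∧ ∀ y ∈ F.1, ⟪y, h⟫_ℂ = 0},
      (⟪T h.1, h.1⟫_ℂ).re

/-- `λ_j(Γ)²` (for `j ≥ 1`): the `j`-th min–max value of `Γ Γ*`. -/
def svalSq (Γ : L2 →L[ℂ] L2) (j : ℕ) : ℝ := minmaxVal (opT Γ) j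

lemma summable_sq_of_memℓp {f : ℕ → ℂ} (hf : Memℓp f 2) :
    Summable fun n : ℕ => ‖f n‖ ^ 2 := by
  have h := hf.summable (p := 2) (by norm_num)
  have h2 : ((2 : ℝ≥0∞).toReal) = ((2 : ℕ) : ℝ) := by norm_num
  rw [h2] at h
  simpa [Real.rpow_natCast] using h

/-- The weighted sequence `n ↦ √(1+n) · c_n`, whose `ℓ²` norm is the `h^{1/2}` norm of `c`. -/
def wSeq (c : ℕ → ℂ) : ℕ → ℂ := fun n => (Real.sqrt (1 + (n : ℝ)) : ℂ) * c n

lemma memℓp_wSeq {c : ℕ → ℂ} (hc : InH12 c) : Memℓp (wSeq c) 2 := by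
  apply memℓp_gen
  have h2 : ((2 : ℝ≥0∞).toReal) = ((2 : ℕ) : ℝ) := by norm_num
  rw [h2]
  have hs : Summable fun n : ℕ => (1 + (n : ℝ)) * ‖c n‖ ^ 2 := by
    have := (summable_sq_of_memℓp hc.1).add hc.2
    convert this using 2 with n
    ring
  have key : ∀ n : ℕ, ‖wSeq c n‖ ^ ((2 : ℕ) : ℝ) = (1 + (n : ℝ)) * ‖c n‖ ^ 2 := by
    intro n
    rw [Real.rpow_natCast]
    have h1 : (0 : ℝ) ≤ 1 + (n : ℝ) := by positivity
    simp only [wSeq, norm_mul, Complex.norm_real, Real.norm_eq_abs,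
      abs_of_nonneg (Real.sqrt_nonneg _)]
    rw [mul_pow, Real.sq_sqrt h1]
  exact (summable_congr fun n => key n).mpr hs

/-- The space `h^{1/2}` as a type. -/
def H12 : Type := {c : ℕ → ℂ // InH12 c}

/-- The isometric embedding of `h^{1/2}` into `ℓ²` given by `c ↦ (√(1+n) c_n)_n`;
the `h^{1/2}` norm of `c` is the `ℓ²` norm of its image. -/
def H12.toL2 (c : H12) : L2 := ⟨wSeq c.1, memℓp_wSeq c.2⟩

lemma H12.toL2_injective : Function.Injective H12.toL2 := by
  intro c d h
  apply Subtype.ext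
  funext n
  have h' : wSeq c.1 n = wSeq d.1 n := congrFun (congrArg Subtype.val h) n
  have hs : (Real.sqrt (1 + (n : ℝ)) : ℂ) ≠ 0 := by
    simp only [ne_eq, Complex.ofReal_eq_zero]
    positivity
  exact mul_left_cancel₀ hs h'

/-- The metric (hence the topology) on `h^{1/2}` induced by the `h^{1/2}` norm
`(Σ (1+n)|c_n|²)^{1/2}`, obtained from the isometric embedding into `ℓ²`. -/
instance : MetricSpace H12 := MetricSpace.induced H12.toL2 H12.toL2_injective inferInstance

/-- `Γ` has rank `N` and its positive singular values are exactly `λ_1, …, λ_N`, each simple: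
equivalently, `Γ Γ*` has positive eigenvalues exactly the `λ_j²`, each with a
one-dimensional eigenspace. -/
def HasSimpleSVals (Γ : L2 →L[ℂ] L2) (N : ℕ) (lam : Fin N → ℝ) : Prop :=
  LinearMap.rank Γ.toLinearMap = N ∧
  {z : ℂ | z ≠ 0 ∧ Module.End.HasEigenvalue (opT Γ).toLinearMap z}
    = Set.range (fun j : Fin N => ((lam j : ℂ)) ^ 2) ∧
  ∀ j : Fin N,
    Module.finrank ℂ (Module.End.eigenspace (opT Γ).toLinearMap ((lam j : ℂ) ^ 2)) = 1

lemma cauchy_sum {N : ℕ} (x y : Fin N → ℝ) (hx : Function.Injective x)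
    (hxy : ∀ j k, x j ≠ y k) (k : Fin N) :
    ∑ j, ((x j - y j) * ∏ i ∈ Finset.univ.erase j, (x j - y i) / (x j - x i)) / (x j - y k) = 1 := by
  classical
  have hdeg : (Lagrange.nodal Finset.univ y - Lagrange.nodal Finset.univ x).degree
      < (Finset.univ : Finset (Fin N)).card := by
    have := Polynomial.degree_sub_lt_left (p := Lagrange.nodal Finset.univ y)
      (q := Lagrange.nodal Finset.univ x) (by simp [Lagrange.degree_nodal])
      (Lagrange.nodal_ne_zero) (by
        rw [(Lagrange.nodal_monic).leadingCoeff, (Lagrange.nodal_monic).leadingCoeff])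
    simpa [Lagrange.degree_nodal] using this
  have hF := Lagrange.eq_interpolate (s := Finset.univ) (v := x) (hx.injOn) hdeg
  have hE := congrArg (Polynomial.eval (y k)) hF
  rw [Lagrange.eval_interpolate_not_at_node _ (fun i _ => (hxy i k).symm)] at hE
  have hL : Polynomial.eval (y k) (Lagrange.nodal Finset.univ x) ≠ 0 := by
    rw [Lagrange.eval_nodal, Finset.prod_ne_zero_iff]
    intro i _; exact sub_ne_zero.mpr (hxy i k).symm
  rw [Polynomial.eval_sub, Lagrange.eval_nodal_at_node (Finset.mem_univ k), zero_sub] at hE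
  have h1 : ∑ i, Lagrange.nodalWeight Finset.univ x i * (y k - x i)⁻¹ *
      Polynomial.eval (x i) (Lagrange.nodal Finset.univ y - Lagrange.nodal Finset.univ x) = -1 := by
    apply mul_left_cancel₀ hL
    rw [← hE]; ring
  rw [← neg_inj, ← h1, ← Finset.sum_neg_distrib]
  apply Finset.sum_congr rfl
  intro j _
  rw [Polynomial.eval_sub, Lagrange.eval_nodal_at_node (Finset.mem_univ j), sub_zero,
    Lagrange.eval_nodal, ← Finset.mul_prod_erase _ _ (Finset.mem_univ j), Lagrange.nodalWeight,
    Finset.prod_div_distrib]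
  rw [Finset.prod_inv_distrib]
  have : (y k - x j)⁻¹ = -(x j - y k)⁻¹ := by rw [← neg_sub, inv_neg]
  rw [this]
  ring

/-- The real data: positive vector `a`, orthogonal matrix `O`. -/
lemma exists_data (N : ℕ) (lam mu : Fin N → ℝ)
    (h1 : ∀ j : Fin N, mu j < lam j)
    (h2 : ∀ j k : Fin N, j < k → lam k < mu j)
    (h3 : ∀ j : Fin N, 0 < mu j) :
    ∃ (a : Fin N → ℝ) (s : Fin N → ℝ) (O : Matrix (Fin N) (Fin N) ℝ),
      (∀ j, 0 < a j) ∧ (∀ k, 0 < s k) ∧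
      (∀ j k, O j k = a j * s k / (lam j ^ 2 - mu k ^ 2)) ∧
      (∀ k, ∑ j, a j ^ 2 / (lam j ^ 2 - mu k ^ 2) = 1) ∧
      O.transpose * O = 1 ∧ O * O.transpose = 1 := by
  classical
  have hl : ∀ j, 0 < lam j := fun j => (h3 j).trans (h1 j)
  set x : Fin N → ℝ := fun j => lam j ^ 2 with hxdef
  set y : Fin N → ℝ := fun j => mu j ^ 2 with hydef
  have sqlt : ∀ {p q : ℝ}, 0 < p → p < q → p ^ 2 < q ^ 2 := fun hp hpq => by
    apply pow_lt_pow_left₀ hpq hp.le (by norm_num)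
  have hyx : ∀ j, y j < x j := fun j => sqlt (h3 j) (h1 j)
  have hxy2 : ∀ j k, j < k → x k < y j := fun j k h => sqlt (hl k) (h2 j k h)
  have hxx : ∀ j k, j < k → x k < x j := fun j k h => (hxy2 j k h).trans (hyx j)
  have hyy : ∀ j k, j < k → y k < y j := fun j k h => (hyx k).trans (hxy2 j k h)
  have hyx' : ∀ j k, j ≤ k → y k < x j := fun j k h => by
    rcases h.eq_or_lt with rfl | h
    · exact hyx j
    · exact (hyy j k h).trans (hyx j)
  have hxyne : ∀ j k, x j ≠ y k := fun j k => by
    rcases le_or_gt j k with h | h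
    · exact (hyx' j k h).ne'
    · exact (hxy2 k j h).ne
  have hxinj : Function.Injective x := fun j k h => by
    rcases lt_trichotomy j k with h' | h' | h'
    · exact absurd h (hxx j k h').ne'
    · exact h'
    · exact absurd h (hxx k j h').ne
  have hyne : ∀ j k, j ≠ k → y j ≠ y k := fun j k h => by
    rcases lt_or_gt_of_ne h with h' | h'
    · exact (hyy j k h').ne'
    · exact (hyy k j h').ne
  set d : Fin N → ℝ := fun j =>
    (x j - y j) * ∏ i ∈ Finset.univ.erase j, (x j - y i) / (x j - x i) with hd
  have hdpos : ∀ j, 0 < d j := fun j => by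
    apply mul_pos (sub_pos.mpr (hyx j))
    apply Finset.prod_pos
    intro i hi
    have hij : i ≠ j := (Finset.mem_erase.mp hi).1
    rcases lt_or_gt_of_ne hij with h | h
    · exact div_pos_of_neg_of_neg (sub_neg.mpr (hxy2 i j h)) (sub_neg.mpr (hxx i j h))
    · exact div_pos (sub_pos.mpr (hyx' j i h.le)) (sub_pos.mpr (hxx j i h))
  have hsum : ∀ k, ∑ j, d j / (x j - y k) = 1 := fun k => cauchy_sum x y hxinj hxyne k
  set b : Fin N → ℝ := fun k => ∑ j, d j / (x j - y k) ^ 2 with hb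
  have hbpos : ∀ k, 0 < b k := fun k => by
    have : Nonempty (Fin N) := ⟨k⟩
    apply Finset.sum_pos
    · intro j _
      have := sub_ne_zero.mpr (hxyne j k)
      have := hdpos j
      positivity
    · exact Finset.univ_nonempty
  have hT : (Matrix.of fun j k => √(d j) * (√(b k))⁻¹ / (x j - y k)).transpose *
      (Matrix.of fun j k => √(d j) * (√(b k))⁻¹ / (x j - y k)) = 1 := by
    ext k l
    rw [Matrix.mul_apply]
    simp only [Matrix.transpose_apply, Matrix.of_apply]
    have hterm : ∀ j, √(d j) * (√(b k))⁻¹ / (x j - y k) * (√(d j) * (√(b l))⁻¹ / (x j - y l)) =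
        (√(b k))⁻¹ * (√(b l))⁻¹ * (d j / ((x j - y k) * (x j - y l))) := fun j => by
      have := Real.mul_self_sqrt (hdpos j).le
      rw [div_mul_div_comm]
      nth_rw 3 [← this]
      ring
    rw [Finset.sum_congr rfl (fun j _ => hterm j), ← Finset.mul_sum]
    by_cases hkl : k = l
    · subst hkl
      rw [Matrix.one_apply_eq]
      have : ∑ i, d i / ((x i - y k) * (x i - y k)) = b k := by
        simp only [hb, sq]
      rw [this, ← mul_inv, Real.mul_self_sqrt (hbpos k).le]
      exact inv_mul_cancel₀ (hbpos k).ne'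
    · rw [Matrix.one_apply_ne hkl]
      have : ∑ i, d i / ((x i - y k) * (x i - y l)) = 0 := by
        have h : ∀ i, d i / ((x i - y k) * (x i - y l)) =
            (y k - y l)⁻¹ * (d i / (x i - y k) - d i / (x i - y l)) := fun i => by
          have e1 := sub_ne_zero.mpr (hxyne i k)
          have e2 := sub_ne_zero.mpr (hxyne i l)
          have e3 := sub_ne_zero.mpr (hyne k l hkl)
          field_simp
          ring
        rw [Finset.sum_congr rfl (fun j _ => h j), ← Finset.mul_sum, Finset.sum_sub_distrib,
          hsum, hsum]
        simp
      rw [this, mul_zero]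
  refine ⟨fun j => √(d j), fun k => (√(b k))⁻¹, Matrix.of fun j k =>
    √(d j) * (√(b k))⁻¹ / (x j - y k), ?_, ?_, ?_, ?_, hT, mul_eq_one_comm.mp hT⟩
  · exact fun j => Real.sqrt_pos.mpr (hdpos j)
  · exact fun k => inv_pos.mpr (Real.sqrt_pos.mpr (hbpos k))
  · intro j k; rfl
  · intro k
    rw [← hsum k]
    apply Finset.sum_congr rfl
    intro j _
    rw [Real.sq_sqrt (hdpos j).le]

/-- Standing hypotheses on the real data. -/
structure SData {N : ℕ} (lam mu a s : Fin N → ℝ) (O : Matrix (Fin N) (Fin N) ℝ) : Prop where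
  lpos : ∀ j, 0 < lam j
  mpos : ∀ j, 0 < mu j
  linj : Function.Injective lam
  minj : Function.Injective mu
  lmne : ∀ j k, lam j ^ 2 - mu k ^ 2 ≠ 0
  apos : ∀ j, 0 < a j
  spos : ∀ k, 0 < s k
  hO : ∀ j k, O j k = a j * s k / (lam j ^ 2 - mu k ^ 2)
  hsum : ∀ k, ∑ j, a j ^ 2 / (lam j ^ 2 - mu k ^ 2) = 1
  OTO : O.transpose * O = 1
  OOT : O * O.transpose = 1

namespace Model
open Matrix

variable {N : ℕ}

/-- complexification of `O` -/
def Oc (O : Matrix (Fin N) (Fin N) ℝ) : Matrix (Fin N) (Fin N) ℂ := O.map (fun t : ℝ => (t : ℂ))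

def Kmat (O : Matrix (Fin N) (Fin N) ℝ) (Q : Fin N → ℂ) : Matrix (Fin N) (Fin N) ℂ :=
  Oc O * diagonal Q * (Oc O)ᵀ

def Amat (O : Matrix (Fin N) (Fin N) ℝ) (D Q : Fin N → ℂ) : Matrix (Fin N) (Fin N) ℂ :=
  Kmat O Q * diagonal (fun j => (D j)⁻¹)

def r0 (a : Fin N → ℝ) (D : Fin N → ℂ) : Fin N → ℂ := fun j => (a j : ℂ) * (D j)⁻¹

def ac (a : Fin N → ℝ) : Fin N → ℂ := fun j => (a j : ℂ)

def rvec (a : Fin N → ℝ) (O : Matrix (Fin N) (Fin N) ℝ) (D Q : Fin N → ℂ) (n : ℕ) : Fin N → ℂ :=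
  (r0 a D) ᵥ* (Amat O D Q) ^ n

def cseq (a : Fin N → ℝ) (O : Matrix (Fin N) (Fin N) ℝ) (D Q : Fin N → ℂ) (n : ℕ) : ℂ :=
  rvec a O D Q n ⬝ᵥ ac a

lemma Kmat_symm (O : Matrix (Fin N) (Fin N) ℝ) (Q : Fin N → ℂ) : (Kmat O Q)ᵀ = Kmat O Q := by
  simp [Kmat, transpose_mul, Matrix.mul_assoc]

lemma Oc_mul_T {lam mu a s : Fin N → ℝ} {O : Matrix (Fin N) (Fin N) ℝ} (h : SData lam mu a s O) :
    Oc O * (Oc O)ᵀ = 1 := by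
  have := congrArg (fun M : Matrix (Fin N) (Fin N) ℝ => M.map (Complex.ofRealHom)) h.OOT
  simp only [Matrix.map_mul] at this
  rw [Matrix.map_one _ (map_zero _) (map_one _)] at this
  exact this

lemma Oc_T_mul {lam mu a s : Fin N → ℝ} {O : Matrix (Fin N) (Fin N) ℝ} (h : SData lam mu a s O) :
    (Oc O)ᵀ * (Oc O) = 1 := mul_eq_one_comm.mp (Oc_mul_T h)

lemma Oc_conjT (O : Matrix (Fin N) (Fin N) ℝ) : (Oc O)ᴴ = (Oc O)ᵀ := by
  ext i j; simp [Oc]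

lemma Oc_T_conjT (O : Matrix (Fin N) (Fin N) ℝ) : ((Oc O)ᵀ)ᴴ = (Oc O) := by
  ext i j; simp [Oc]

/-- `∑ a_i O_ik = s_k` -/
lemma sum_aO {lam mu a s : Fin N → ℝ} {O : Matrix (Fin N) (Fin N) ℝ} (h : SData lam mu a s O)
    (k : Fin N) : ∑ i, a i * O i k = s k := by
  have := h.hsum k
  calc ∑ i, a i * O i k = s k * ∑ j, a j ^ 2 / (lam j ^ 2 - mu k ^ 2) := by
        rw [Finset.mul_sum]; apply Finset.sum_congr rfl; intro i _; rw [h.hO]; ring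
    _ = s k := by rw [this, mul_one]

lemma O_mu_OT {lam mu a s : Fin N → ℝ} {O : Matrix (Fin N) (Fin N) ℝ} (h : SData lam mu a s O) :
    Oc O * diagonal (fun k => ((mu k : ℂ)) ^ 2) * (Oc O)ᵀ =
      diagonal (fun k => ((lam k : ℂ)) ^ 2) - vecMulVec (ac a) (ac a) := by
  have h1 : Oc O * diagonal (fun k => ((mu k : ℂ)) ^ 2) =
      (diagonal (fun k => ((lam k : ℂ)) ^ 2) - vecMulVec (ac a) (ac a)) * Oc O := by
    ext j k
    rw [mul_diagonal, Matrix.sub_mul, Matrix.sub_apply, diagonal_mul, Matrix.mul_apply]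
    simp only [vecMulVec_apply, Oc, ac, Matrix.map_apply]
    have h2 := sum_aO h k
    have h3 : ∑ i, (a j : ℂ) * (a i : ℂ) * (O i k : ℂ) = (a j : ℂ) * (s k : ℂ) := by
      rw [← h2]; push_cast; rw [Finset.mul_sum]; apply Finset.sum_congr rfl; intros; ring
    rw [h3]
    have h4 : (lam j ^ 2 - mu k ^ 2) * O j k = a j * s k := by
      rw [h.hO]; field_simp [h.lmne j k]
    have h5 : ((lam j : ℂ) ^ 2 - (mu k : ℂ) ^ 2) * (O j k : ℂ) = (a j : ℂ) * (s k : ℂ) := by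
      exact_mod_cast h4
    rw [← h5]; ring
  rw [h1, Matrix.mul_assoc, Oc_mul_T h, Matrix.mul_one]

lemma KHK {lam mu a s : Fin N → ℝ} {O : Matrix (Fin N) (Fin N) ℝ} (h : SData lam mu a s O)
    {Q : Fin N → ℂ} (hQ : ∀ k, ‖Q k‖ = mu k) :
    (Kmat O Q)ᴴ * Kmat O Q =
      diagonal (fun k => ((lam k : ℂ)) ^ 2) - vecMulVec (ac a) (ac a) := by
  rw [← O_mu_OT h]
  have : diagonal (fun k => ((mu k : ℂ)) ^ 2) = (diagonal Q)ᴴ * diagonal Q := by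
    rw [diagonal_conjTranspose, diagonal_mul_diagonal]
    congr 1; funext k
    rw [← hQ k, ← Complex.conj_mul']; rfl
  rw [this]
  simp only [Kmat, conjTranspose_mul, Oc_conjT, Oc_T_conjT]
  have := Oc_T_mul h
  calc _ = Oc O * ((diagonal Q)ᴴ * (((Oc O)ᵀ * Oc O) * (diagonal Q * (Oc O)ᵀ))) := by
        simp only [Matrix.mul_assoc]
    _ = _ := by rw [this, Matrix.one_mul]; simp only [Matrix.mul_assoc]

lemma Dne {lam mu a s : Fin N → ℝ} {O : Matrix (Fin N) (Fin N) ℝ} (h : SData lam mu a s O)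
    {D : Fin N → ℂ} (hD : ∀ k, ‖D k‖ = lam k) (j : Fin N) : D j ≠ 0 := by
  rw [← norm_pos_iff, hD]; exact h.lpos j

lemma AHA {lam mu a s : Fin N → ℝ} {O : Matrix (Fin N) (Fin N) ℝ} (h : SData lam mu a s O)
    {D Q : Fin N → ℂ} (hD : ∀ k, ‖D k‖ = lam k) (hQ : ∀ k, ‖Q k‖ = mu k) :
    (Amat O D Q)ᴴ * Amat O D Q = 1 - vecMulVec (star (r0 a D)) (r0 a D) := by
  have : (Amat O D Q)ᴴ * Amat O D Q = diagonal (fun j => star (D j)⁻¹) *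
      ((Kmat O Q)ᴴ * Kmat O Q) * diagonal (fun j => (D j)⁻¹) := by
    simp only [Amat, conjTranspose_mul, diagonal_conjTranspose, Matrix.mul_assoc]
    rfl
  rw [this, KHK h hQ]
  ext i j
  rw [mul_diagonal, diagonal_mul, Matrix.sub_apply, Matrix.sub_apply, vecMulVec_apply,
    vecMulVec_apply]
  have hl : (lam i : ℂ) ^ 2 = star (D i) * D i := by
    rw [← hD i, ← Complex.conj_mul']; rfl
  have hi := Dne h hD i
  have hi' : star (D i) ≠ 0 := star_ne_zero.mpr hi
  by_cases hij : i = j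
  · subst hij
    rw [diagonal_apply_eq, one_apply_eq, hl]
    simp only [ac, r0, Pi.star_apply, star_mul', star_inv₀]
    have : star (a i : ℂ) = (a i : ℂ) := Complex.conj_ofReal _
    rw [this]
    field_simp
  · rw [diagonal_apply_ne _ hij, one_apply_ne hij]
    simp only [ac, r0, Pi.star_apply, star_mul', star_inv₀]
    have : star (a i : ℂ) = (a i : ℂ) := Complex.conj_ofReal _
    rw [this]
    ring

def nsq (x : Fin N → ℂ) : ℝ := ∑ j, ‖x j‖ ^ 2

lemma nsq_eq (x : Fin N → ℂ) : (nsq x : ℂ) = star x ⬝ᵥ x := by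
  simp only [nsq, dotProduct, Complex.ofReal_sum, Pi.star_apply]
  apply Finset.sum_congr rfl; intro j _
  rw [Complex.ofReal_pow, ← Complex.conj_mul']; rfl

lemma nsq_nonneg (x : Fin N → ℂ) : 0 ≤ nsq x := Finset.sum_nonneg fun _ _ => by positivity

lemma nsq_eq_zero {x : Fin N → ℂ} (h : nsq x = 0) : x = 0 := by
  funext j
  have := (Finset.sum_eq_zero_iff_of_nonneg (fun _ _ => by positivity)).mp h j (Finset.mem_univ j)
  simpa using this

lemma nsq_pos {x : Fin N → ℂ} (h : x ≠ 0) : 0 < nsq x :=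
  lt_of_le_of_ne (nsq_nonneg x) fun h' => h (nsq_eq_zero h'.symm)

lemma nsq_smul (t : ℂ) (x : Fin N → ℂ) : nsq (t • x) = ‖t‖ ^ 2 * nsq x := by
  simp [nsq, mul_pow, Finset.mul_sum]

lemma nsq_A {lam mu a s : Fin N → ℝ} {O : Matrix (Fin N) (Fin N) ℝ} (h : SData lam mu a s O)
    {D Q : Fin N → ℂ} (hD : ∀ k, ‖D k‖ = lam k) (hQ : ∀ k, ‖Q k‖ = mu k) (x : Fin N → ℂ) :
    nsq (Amat O D Q *ᵥ x) = nsq x - ‖r0 a D ⬝ᵥ x‖ ^ 2 := by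
  have : ((nsq (Amat O D Q *ᵥ x) : ℝ) : ℂ) = ((nsq x - ‖r0 a D ⬝ᵥ x‖ ^ 2 : ℝ) : ℂ) := by
    push_cast
    rw [nsq_eq, nsq_eq, star_mulVec, ← dotProduct_mulVec, mulVec_mulVec, AHA h hD hQ, sub_mulVec,
      one_mulVec, dotProduct_sub, vecMulVec_mulVec, ← Complex.conj_mul']
    congr 1
    simp only [op_smul_eq_smul, dotProduct_smul, smul_eq_mul]
    rw [mul_comm, star_dotProduct_star]
    rfl
  exact_mod_cast this

lemma Amat_mul_D {lam mu a s : Fin N → ℝ} {O : Matrix (Fin N) (Fin N) ℝ} (h : SData lam mu a s O)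
    {D Q : Fin N → ℂ} (hD : ∀ k, ‖D k‖ = lam k) : Amat O D Q * diagonal D = Kmat O Q := by
  rw [Amat, Matrix.mul_assoc, diagonal_mul_diagonal]
  have : (fun i => (D i)⁻¹ * D i) = fun _ => 1 := by
    funext i; exact inv_mul_cancel₀ (Dne h hD i)
  rw [this, diagonal_one, Matrix.mul_one]

lemma D_mul_AmatT {lam mu a s : Fin N → ℝ} {O : Matrix (Fin N) (Fin N) ℝ} (h : SData lam mu a s O)
    {D Q : Fin N → ℂ} (hD : ∀ k, ‖D k‖ = lam k) : diagonal D * (Amat O D Q)ᵀ = Kmat O Q := by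
  have := congrArg transpose (Amat_mul_D (Q := Q) h hD)
  rw [transpose_mul, diagonal_transpose, Kmat_symm] at this
  exact this

lemma hankel1 {lam mu a s : Fin N → ℝ} {O : Matrix (Fin N) (Fin N) ℝ} (h : SData lam mu a s O)
    {D Q : Fin N → ℂ} (hD : ∀ k, ‖D k‖ = lam k) (n p : ℕ) :
    rvec a O D Q n ⬝ᵥ (diagonal D *ᵥ rvec a O D Q p) = cseq a O D Q (n + p) := by
  have hs : SemiconjBy (diagonal D) (Amat O D Q)ᵀ (Amat O D Q) := by
    rw [SemiconjBy, D_mul_AmatT h hD, Amat_mul_D h hD]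
  have hp := (hs.pow_right p).eq
  have hr : diagonal D *ᵥ r0 a D = ac a := by
    funext j
    rw [mulVec_diagonal]
    simp only [r0, ac]
    field_simp [Dne h hD j]
  simp only [cseq, rvec]
  rw [← mulVec_transpose (Amat O D Q ^ p), mulVec_mulVec, transpose_pow, hp, ← mulVec_mulVec, hr,
    dotProduct_mulVec, vecMul_vecMul, ← pow_add]

lemma rvec_succ (a : Fin N → ℝ) (O : Matrix (Fin N) (Fin N) ℝ) (D Q : Fin N → ℂ) (n : ℕ) :
    rvec a O D Q (n + 1) = rvec a O D Q n ᵥ* Amat O D Q := by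
  simp [rvec, pow_succ, vecMul_vecMul]

lemma hankel2 {lam mu a s : Fin N → ℝ} {O : Matrix (Fin N) (Fin N) ℝ} (h : SData lam mu a s O)
    {D Q : Fin N → ℂ} (hD : ∀ k, ‖D k‖ = lam k) (n p : ℕ) :
    rvec a O D Q n ⬝ᵥ (Kmat O Q *ᵥ rvec a O D Q p) = cseq a O D Q (n + p + 1) := by
  rw [← Amat_mul_D h hD, ← mulVec_mulVec, dotProduct_mulVec, ← rvec_succ, hankel1 h hD]
  congr 1; ring

lemma nsq_pow {lam mu a s : Fin N → ℝ} {O : Matrix (Fin N) (Fin N) ℝ} (h : SData lam mu a s O)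
    {D Q : Fin N → ℂ} (hD : ∀ k, ‖D k‖ = lam k) (hQ : ∀ k, ‖Q k‖ = mu k) (x : Fin N → ℂ) (n : ℕ) :
    nsq ((Amat O D Q) ^ n *ᵥ x) = nsq x - ∑ m ∈ Finset.range n, ‖rvec a O D Q m ⬝ᵥ x‖ ^ 2 := by
  induction n with
  | zero => simp
  | succ n ih =>
    rw [pow_succ', ← mulVec_mulVec, nsq_A h hD hQ, ih, Finset.sum_range_succ, dotProduct_mulVec]
    rw [sub_sub]; rfl

/-- an eigenvector of modulus one is impossible -/
lemma no_unimod {lam mu a s : Fin N → ℝ} {O : Matrix (Fin N) (Fin N) ℝ} (h : SData lam mu a s O)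
    {D Q : Fin N → ℂ} (hD : ∀ k, ‖D k‖ = lam k) (hQ : ∀ k, ‖Q k‖ = mu k)
    {w : ℂ} (hw : ‖w‖ = 1) {x : Fin N → ℂ} (hx : Amat O D Q *ᵥ x = w • x) : x = 0 := by
  have horth : ∀ {z : Fin N → ℂ}, Amat O D Q *ᵥ z = w • z → r0 a D ⬝ᵥ z = 0 := by
    intro z hz
    have := nsq_A h hD hQ z
    rw [hz, nsq_smul, hw] at this
    have h2 : ‖r0 a D ⬝ᵥ z‖ ^ 2 = 0 := by linarith
    simpa using h2
  -- invariance under H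
  have hH : ∀ {z : Fin N → ℂ}, Amat O D Q *ᵥ z = w • z →
      Amat O D Q *ᵥ (diagonal D *ᵥ star z) = w • (diagonal D *ᵥ star z) := by
    intro z hz
    have h1 : (Amat O D Q)ᴴ *ᵥ (w • z) = z := by
      rw [← hz, mulVec_mulVec, AHA h hD hQ, sub_mulVec, one_mulVec, vecMulVec_mulVec, horth hz]
      simp
    have h2 : (Amat O D Q)ᵀ *ᵥ (star w • star z) = star z := by
      have := congrArg star h1
      rw [star_mulVec, conjTranspose_conjTranspose, star_smul] at this
      rw [mulVec_transpose]; exact this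
    have h3 : (Amat O D Q)ᵀ *ᵥ star z = w • star z := by
      have hww : w * star w = 1 := by
        have := Complex.mul_conj' w
        rw [hw] at this; simpa using this
      calc _ = (w * star w) • ((Amat O D Q)ᵀ *ᵥ star z) := by rw [hww, one_smul]
        _ = w • ((Amat O D Q)ᵀ *ᵥ (star w • star z)) := by rw [mulVec_smul, smul_smul]
        _ = _ := by rw [h2]
    rw [mulVec_mulVec, Amat_mul_D h hD, ← D_mul_AmatT h hD, ← mulVec_mulVec, h3, mulVec_smul]
  have hiter : ∀ m : ℕ, Amat O D Q *ᵥ (fun j => ((lam j : ℂ) ^ 2) ^ m * x j) =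
      w • (fun j => ((lam j : ℂ) ^ 2) ^ m * x j) := by
    intro m
    induction m with
    | zero => simpa using hx
    | succ m ih =>
      have := hH (hH ih)
      convert this using 2 <;>
      · funext j
        simp only [mulVec_diagonal, Pi.star_apply, star_mul', star_star]
        have hl : (lam j : ℂ) ^ 2 = D j * star (D j) := by
          rw [← hD j, ← Complex.mul_conj']; rfl
        rw [pow_succ, hl]; ring
  have hv : (fun j => r0 a D j * x j) = 0 := by
    apply Matrix.eq_zero_of_forall_pow_sum_mul_pow_eq_zero (f := fun j => (lam j : ℂ) ^ 2)
    · intro i j hij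
      have hij' : (lam i : ℂ) ^ 2 = (lam j : ℂ) ^ 2 := hij
      have : lam i ^ 2 = lam j ^ 2 := by exact_mod_cast hij'
      apply h.linj
      exact (pow_left_inj₀ (h.lpos i).le (h.lpos j).le two_ne_zero).mp this
    · intro m
      have := horth (hiter m)
      rw [dotProduct] at this
      rw [← this]
      apply Finset.sum_congr rfl
      intros; ring
  funext j
  have := congrFun hv j
  simp only [Pi.zero_apply, mul_eq_zero, r0, inv_eq_zero, Complex.ofReal_eq_zero,
    (h.apos j).ne', Dne h hD j, false_or] at this
  exact this

lemma strict {lam mu a s : Fin N → ℝ} {O : Matrix (Fin N) (Fin N) ℝ} (h : SData lam mu a s O)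
    {D Q : Fin N → ℂ} (hD : ∀ k, ‖D k‖ = lam k) (hQ : ∀ k, ‖Q k‖ = mu k)
    {x : Fin N → ℂ} (hx : x ≠ 0) : nsq ((Amat O D Q) ^ N *ᵥ x) < nsq x := by
  by_contra hcon
  have hN := nsq_pow h hD hQ x N
  have hz : ∑ m ∈ Finset.range N, ‖rvec a O D Q m ⬝ᵥ x‖ ^ 2 = 0 := by
    apply le_antisymm
    · linarith
    · exact Finset.sum_nonneg fun _ _ => by positivity
  have hz' : ∀ m < N, rvec a O D Q m ⬝ᵥ x = 0 := by
    intro m hm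
    have := (Finset.sum_eq_zero_iff_of_nonneg (fun _ _ => by positivity)).mp hz m
      (Finset.mem_range.mpr hm)
    simpa using this
  -- Cayley-Hamilton
  have hall : ∀ m, rvec a O D Q m ⬝ᵥ x = 0 := by
    intro m
    have hdeg : ((Polynomial.X ^ m : Polynomial ℂ) %ₘ (Amat O D Q).charpoly).degree < (N : WithBot ℕ) := by
      have := Polynomial.degree_modByMonic_lt (Polynomial.X ^ m : Polynomial ℂ)
        (Matrix.charpoly_monic (Amat O D Q))
      rwa [Matrix.charpoly_degree_eq_dim, Fintype.card_fin] at this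
    rw [rvec, Matrix.pow_eq_aeval_mod_charpoly, Polynomial.aeval_eq_sum_range' (n := N)]
    · rw [← dotProduct_mulVec, Matrix.sum_mulVec, dotProduct_sum]
      apply Finset.sum_eq_zero
      intro i hi
      rw [smul_mulVec, dotProduct_smul, dotProduct_mulVec]
      have := hz' i (Finset.mem_range.mp hi)
      rw [rvec] at this
      rw [this, smul_zero]
    · by_cases h0 : ((Polynomial.X ^ m : Polynomial ℂ) %ₘ (Amat O D Q).charpoly) = 0
      · rw [h0]; simp
        rcases Nat.eq_zero_or_pos N with h00 | h00
        · subst h00; exact absurd (Subsingleton.elim x 0) hx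
        · exact h00
      · exact (Polynomial.natDegree_lt_iff_degree_lt h0).mpr hdeg
  let U : Submodule ℂ (Fin N → ℂ) :=
    { carrier := {z | ∀ m, rvec a O D Q m ⬝ᵥ z = 0}
      add_mem' := fun {u v} hu hv m => by rw [dotProduct_add, hu m, hv m, add_zero]
      zero_mem' := fun m => by simp
      smul_mem' := fun t u hu m => by rw [dotProduct_smul, hu m, smul_zero] }
  have hU : ∀ z ∈ U, (Matrix.toLin' (Amat O D Q)) z ∈ U := by
    intro z hz m
    rw [Matrix.toLin'_apply, dotProduct_mulVec, ← rvec_succ]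
    exact hz (m + 1)
  have : Nontrivial U := ⟨⟨⟨x, hall⟩, 0, fun h' => hx (congrArg Subtype.val h')⟩⟩
  obtain ⟨w, hw⟩ := Module.End.exists_eigenvalue ((Matrix.toLin' (Amat O D Q)).restrict hU)
  obtain ⟨v, hv⟩ := hw.exists_hasEigenvector
  have hv1 := hv.apply_eq_smul
  have hv2 : Amat O D Q *ᵥ (v : Fin N → ℂ) = w • (v : Fin N → ℂ) := by
    have := congrArg Subtype.val hv1
    simpa using this
  have hv0 : (v : Fin N → ℂ) ≠ 0 := fun h' => hv.2 (Subtype.ext h')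
  have h0 : r0 a D ⬝ᵥ (v : Fin N → ℂ) = 0 := by
    have := v.2 0
    simpa [rvec] using this
  have hn := nsq_A h hD hQ (v : Fin N → ℂ)
  rw [hv2, nsq_smul, h0] at hn
  have hw1 : ‖w‖ = 1 := by
    have hp := nsq_pos hv0
    have : ‖w‖ ^ 2 = 1 := by
      apply mul_right_cancel₀ hp.ne'
      rw [hn]; simp
    exact (pow_eq_one_iff_of_nonneg (norm_nonneg _) two_ne_zero).mp this
  exact hv0 (no_unimod h hD hQ hw1 hv2)

end Model

namespace Model
open Matrix

variable {N : ℕ}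

def Dth (lam : Fin N → ℝ) (t : Fin N ⊕ Fin N → Circle) : Fin N → ℂ :=
  fun j => (lam j : ℂ) * (t (Sum.inl j) : ℂ)

def Qth (mu : Fin N → ℝ) (t : Fin N ⊕ Fin N → Circle) : Fin N → ℂ :=
  fun j => (mu j : ℂ) * (t (Sum.inr j) : ℂ)

variable {lam mu a s : Fin N → ℝ} {O : Matrix (Fin N) (Fin N) ℝ}

lemma norm_Dth (h : SData lam mu a s O) (t : Fin N ⊕ Fin N → Circle) (k : Fin N) :
    ‖Dth lam t k‖ = lam k := by
  simp [Dth, abs_of_pos (h.lpos k), Circle.norm_coe]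

lemma norm_Qth (h : SData lam mu a s O) (t : Fin N ⊕ Fin N → Circle) (k : Fin N) :
    ‖Qth mu t k‖ = mu k := by
  simp [Qth, abs_of_pos (h.mpos k), Circle.norm_coe]

lemma continuous_Dth (j : Fin N) : Continuous fun t => Dth lam t j := by
  unfold Dth; fun_prop

lemma continuous_Qth (j : Fin N) : Continuous fun t => Qth mu t j := by
  unfold Qth; fun_prop

lemma continuous_Amat (h : SData lam mu a s O) :
    Continuous fun t => Amat O (Dth lam t) (Qth mu t) := by
  unfold Amat Kmat
  refine Continuous.matrix_mul (Continuous.matrix_mul (Continuous.matrix_mul continuous_const ?_)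
    continuous_const) ?_
  · exact Continuous.matrix_diagonal (continuous_pi fun j => continuous_Qth j)
  · exact Continuous.matrix_diagonal (continuous_pi fun j =>
      (continuous_Dth j).inv₀ fun t => Dne h (norm_Dth h t) j)

lemma continuous_cseq (h : SData lam mu a s O) (n : ℕ) :
    Continuous fun t => cseq a O (Dth lam t) (Qth mu t) n := by
  unfold cseq rvec
  refine Continuous.dotProduct (Continuous.matrix_vecMul ?_ ((continuous_Amat h).pow n)) continuous_const
  unfold r0
  exact continuous_pi fun j => continuous_const.mul
    ((continuous_Dth j).inv₀ fun t => Dne h (norm_Dth h t) j)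

lemma continuous_nsq : Continuous (nsq : (Fin N → ℂ) → ℝ) := by
  unfold nsq; fun_prop

lemma isCompact_sphere : IsCompact {x : Fin N → ℂ | nsq x = 1} := by
  apply (isCompact_closedBall (0 : Fin N → ℂ) 1).of_isClosed_subset
  · exact isClosed_singleton.preimage continuous_nsq
  · intro x hx
    rw [mem_closedBall_zero_iff, pi_norm_le_iff_of_nonneg zero_le_one]
    intro j
    have h1 : ‖x j‖ ^ 2 ≤ nsq x :=
      Finset.single_le_sum (f := fun j => ‖x j‖ ^ 2) (fun _ _ => by positivity) (Finset.mem_univ j)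
    have h2 : nsq x = 1 := hx
    rw [h2] at h1
    exact (sq_le_one_iff₀ (norm_nonneg _)).mp h1

lemma uniform_q (h : SData lam mu a s O) : ∃ q : ℝ, q < 1 ∧ ∀ t (x : Fin N → ℂ),
    nsq ((Amat O (Dth lam t) (Qth mu t)) ^ N *ᵥ x) ≤ q * nsq x := by
  set K : Set ((Fin N ⊕ Fin N → Circle) × (Fin N → ℂ)) :=
    Set.univ ×ˢ {x : Fin N → ℂ | nsq x = 1} with hK
  have hKc : IsCompact K := isCompact_univ.prod isCompact_sphere
  have hcont : Continuous fun z : (Fin N ⊕ Fin N → Circle) × (Fin N → ℂ) =>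
      nsq ((Amat O (Dth lam z.1) (Qth mu z.1)) ^ N *ᵥ z.2) := by
    apply continuous_nsq.comp
    exact Continuous.matrix_mulVec (((continuous_Amat h).comp continuous_fst).pow N) continuous_snd
  have hscale : ∀ x : Fin N → ℂ, x ≠ 0 → ∃ r : ℝ, 0 < r ∧ nsq ((r : ℂ) • x) = 1 ∧ r ^ 2 * nsq x = 1 := by
    intro x hx
    have hp := nsq_pos hx
    have e : (√(nsq x))⁻¹ ^ 2 * nsq x = 1 := by
      rw [inv_pow, Real.sq_sqrt hp.le]; exact inv_mul_cancel₀ hp.ne'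
    refine ⟨(√(nsq x))⁻¹, by positivity, ?_, e⟩
    rw [nsq_smul, Complex.norm_real, Real.norm_eq_abs, sq_abs, e]
  by_cases hne : K.Nonempty
  · obtain ⟨z, hz, hmax⟩ := hKc.exists_isMaxOn hne hcont.continuousOn
    have hz1 : nsq z.2 = 1 := hz.2
    have hz0 : z.2 ≠ 0 := by
      intro h0; rw [h0] at hz1; simp [nsq] at hz1
    refine ⟨nsq ((Amat O (Dth lam z.1) (Qth mu z.1)) ^ N *ᵥ z.2), ?_, ?_⟩
    · have := strict h (norm_Dth h z.1) (norm_Qth h z.1) hz0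
      rwa [hz1] at this
    · intro t x
      by_cases hx : x = 0
      · subst hx; simp [nsq]
      obtain ⟨r, hr, h1, h2⟩ := hscale x hx
      have hm : (t, (r : ℂ) • x) ∈ K := ⟨trivial, h1⟩
      have := hmax hm
      simp only [Set.mem_ofPred_eq, mulVec_smul, nsq_smul, Complex.norm_real, Real.norm_eq_abs, sq_abs] at this
      have hp := nsq_pos hx
      calc nsq ((Amat O (Dth lam t) (Qth mu t)) ^ N *ᵥ x)
          = nsq x * (r ^ 2 * nsq ((Amat O (Dth lam t) (Qth mu t)) ^ N *ᵥ x)) := by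
            rw [← mul_assoc, mul_comm (nsq x), h2, one_mul]
        _ ≤ nsq x * nsq ((Amat O (Dth lam z.1) (Qth mu z.1)) ^ N *ᵥ z.2) := by gcongr
        _ = _ := mul_comm _ _
  · refine ⟨0, one_pos, fun t x => ?_⟩
    by_cases hx : x = 0
    · subst hx; simp [nsq]
    obtain ⟨r, hr, h1, h2⟩ := hscale x hx
    exact absurd ⟨(t, (r : ℂ) • x), trivial, h1⟩ hne

lemma nsq_pow_le (h : SData lam mu a s O) (t) (x : Fin N → ℂ) (n : ℕ) :
    nsq ((Amat O (Dth lam t) (Qth mu t)) ^ n *ᵥ x) ≤ nsq x := by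
  rw [nsq_pow h (norm_Dth h t) (norm_Qth h t)]
  have : 0 ≤ ∑ m ∈ Finset.range n, ‖rvec a O (Dth lam t) (Qth mu t) m ⬝ᵥ x‖ ^ 2 :=
    Finset.sum_nonneg fun _ _ => by positivity
  linarith

lemma decay_nsq (hN : 1 ≤ N) (h : SData lam mu a s O) : ∃ C r : ℝ, 0 ≤ C ∧ 0 ≤ r ∧ r < 1 ∧
    ∀ t (x : Fin N → ℂ) (n : ℕ),
    nsq ((Amat O (Dth lam t) (Qth mu t)) ^ n *ᵥ x) ≤ C * r ^ n * nsq x := by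
  obtain ⟨q, hq, hqx⟩ := uniform_q h
  set q' : ℝ := max q (1/2) with hq'
  have hq'0 : 0 < q' := lt_of_lt_of_le (by norm_num) (le_max_right _ _)
  have hq'1 : q' < 1 := max_lt hq (by norm_num)
  set r : ℝ := q' ^ ((N : ℝ)⁻¹) with hr
  have hrN : r ^ N = q' := Real.rpow_inv_natCast_pow hq'0.le (by omega)
  have hr0 : 0 < r := Real.rpow_pos_of_pos hq'0 _
  have hr1 : r < 1 := Real.rpow_lt_one hq'0.le hq'1 (by positivity)
  refine ⟨q'⁻¹, r, by positivity, hr0.le, hr1, fun t x n => ?_⟩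
  induction n using Nat.strong_induction_on generalizing x with
  | _ n ih =>
    rcases lt_or_ge n N with hn | hn
    · have h1 : 1 ≤ q'⁻¹ * r ^ n := by
        rw [← hrN, ← div_eq_inv_mul, le_div_iff₀ (by positivity), one_mul]
        exact pow_le_pow_of_le_one hr0.le hr1.le hn.le
      calc _ ≤ 1 * nsq x := by rw [one_mul]; exact nsq_pow_le h t x n
        _ ≤ _ := by have := nsq_nonneg x; gcongr
    · obtain ⟨m, rfl⟩ := Nat.exists_eq_add_of_le hn
      rw [pow_add, ← mulVec_mulVec]
      have h1 := ih m (by omega) x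
      calc _ ≤ q * nsq (Amat O (Dth lam t) (Qth mu t) ^ m *ᵥ x) := hqx t _
        _ ≤ q' * (q'⁻¹ * r ^ m * nsq x) := by
            have := nsq_nonneg (Amat O (Dth lam t) (Qth mu t) ^ m *ᵥ x)
            have := le_max_left q (1/2)
            gcongr
        _ = _ := by rw [pow_add, hrN]; ring

lemma decay (hN : 1 ≤ N) (h : SData lam mu a s O) : ∃ C r : ℝ, 0 ≤ C ∧ 0 ≤ r ∧ r < 1 ∧
    (∀ t (n : ℕ), ‖cseq a O (Dth lam t) (Qth mu t) n‖ ≤ C * r ^ n) ∧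
    (∀ t (n : ℕ) j, ‖rvec a O (Dth lam t) (Qth mu t) n j‖ ≤ C * r ^ n) ∧
    (∀ t (x : Fin N → ℂ), Filter.Tendsto
      (fun n => nsq ((Amat O (Dth lam t) (Qth mu t)) ^ n *ᵥ x)) Filter.atTop (nhds 0)) := by
  obtain ⟨C, r, hC, hr, hr1, hd⟩ := decay_nsq hN h
  have key : ∀ t (n : ℕ) (x : Fin N → ℂ), ‖rvec a O (Dth lam t) (Qth mu t) n ⬝ᵥ x‖ ≤
      √C * √r ^ n * √(nsq x) := by
    intro t n x
    have h1 := nsq_A h (norm_Dth h t) (norm_Qth h t) ((Amat O (Dth lam t) (Qth mu t)) ^ n *ᵥ x)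
    have h2 := nsq_nonneg (Amat O (Dth lam t) (Qth mu t) *ᵥ ((Amat O (Dth lam t) (Qth mu t)) ^ n *ᵥ x))
    rw [dotProduct_mulVec] at h1
    have h3 : ‖rvec a O (Dth lam t) (Qth mu t) n ⬝ᵥ x‖ ^ 2 ≤ C * r ^ n * nsq x := by
      refine le_trans ?_ (hd t x n)
      unfold rvec; linarith
    have := Real.le_sqrt_of_sq_le h3
    rwa [Real.sqrt_mul (by positivity), Real.sqrt_mul hC, Real.sqrt_eq_rpow (r ^ n), ← Real.rpow_natCast,
      ← Real.rpow_mul hr, mul_comm (n : ℝ), Real.rpow_mul hr, ← Real.sqrt_eq_rpow,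
      Real.rpow_natCast] at this
  refine ⟨√C * max 1 (√(nsq (ac a))), √r, by positivity, by positivity, ?_, ?_, ?_, ?_⟩
  · rw [Real.sqrt_lt' one_pos]; simpa using hr1
  · intro t n
    refine (key t n (ac a)).trans ?_
    calc _ ≤ √C * √r ^ n * max 1 (√(nsq (ac a))) := by gcongr; exact le_max_right _ _
      _ = _ := by ring
  · intro t n j
    have := key t n (Pi.single j 1)
    have hn : nsq (Pi.single j 1 : Fin N → ℂ) = 1 := by
      unfold nsq
      rw [Finset.sum_eq_single j]
      · simp
      · intro i _ hij; simp [hij]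
      · simp
    rw [hn, dotProduct_single, mul_one] at this
    refine this.trans ?_
    calc _ ≤ √C * √r ^ n * max 1 (√(nsq (ac a))) := by
          rw [Real.sqrt_one]; gcongr; exact le_max_left _ _
      _ = _ := by ring
  · intro t x
    refine squeeze_zero (fun n => nsq_nonneg _) (fun n => hd t x n) ?_
    have := ((tendsto_pow_atTop_nhds_zero_of_lt_one hr hr1).const_mul C).mul_const (nsq x)
    simpa using this

end Model

namespace Model
open Matrix

lemma inner_star_star (f g : L2) : ⟪star f, star g⟫_ℂ = ⟪g, f⟫_ℂ := by
  rw [lp.inner_eq_tsum, lp.inner_eq_tsum]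
  apply tsum_congr
  intro n
  simp [mul_comm]

lemma orthonormal_star {ι : Type*} {f : ι → L2} (hf : Orthonormal ℂ f) :
    Orthonormal ℂ (fun j => star (f j)) := by
  classical
  rw [orthonormal_iff_ite] at hf ⊢
  intro i j
  rw [inner_star_star, hf]
  simp [eq_comm]

variable {N : ℕ}

def GamOf (f : Fin N → L2) (s : Fin N → ℂ) : L2 →L[ℂ] L2 :=
  ∑ j, s j • InnerProductSpace.rankOne ℂ (f j) (star (f j))

lemma GamOf_apply (f : Fin N → L2) (s : Fin N → ℂ) (x : L2) :
    GamOf f s x = ∑ j, (s j * ⟪star (f j), x⟫_ℂ) • f j := by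
  simp [GamOf, smul_smul]

lemma GamOf_adj_apply (f : Fin N → L2) (s : Fin N → ℂ) (x : L2) :
    ContinuousLinearMap.adjoint (GamOf f s) x = ∑ j, (star (s j) * ⟪f j, x⟫_ℂ) • star (f j) := by
  simp [GamOf, map_sum, map_smulₛₗ, smul_smul]

lemma opT_GamOf {f : Fin N → L2} (hf : Orthonormal ℂ f) (s : Fin N → ℂ) (x : L2) :
    opT (GamOf f s) x = ∑ j, (((‖s j‖ : ℂ)) ^ 2 * ⟪f j, x⟫_ℂ) • f j := by
  classical
  rw [opT, ContinuousLinearMap.comp_apply, GamOf_adj_apply, GamOf_apply]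
  apply Finset.sum_congr rfl
  intro j _
  have hs := orthonormal_iff_ite.mp (orthonormal_star hf)
  rw [inner_sum]
  simp only [inner_smul_right, hs]
  simp only [mul_ite, mul_one, mul_zero, Finset.sum_ite_eq, Finset.mem_univ, if_true]
  rw [← mul_assoc, ← Complex.mul_conj']
  rfl

lemma inner_sum_orth {f : Fin N → L2} (hf : Orthonormal ℂ f) (w : Fin N → ℂ) (j : Fin N) :
    ⟪f j, ∑ i, w i • f i⟫_ℂ = w j := hf.inner_right_fintype w j

lemma svals_GamOf {f : Fin N → L2} (hf : Orthonormal ℂ f) {s : Fin N → ℂ} {lam : Fin N → ℝ}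
    (hs : ∀ j, ‖s j‖ = lam j) (hpos : ∀ j, 0 < lam j) (hinj : Function.Injective lam) :
    HasSimpleSVals (GamOf f s) N lam := by
  classical
  have hT : ∀ x, opT (GamOf f s) x = ∑ j, (((lam j : ℂ)) ^ 2 * ⟪f j, x⟫_ℂ) • f j := by
    intro x; rw [opT_GamOf hf]; simp only [hs]
  have hTi : ∀ x j, ⟪f j, opT (GamOf f s) x⟫_ℂ = (lam j : ℂ) ^ 2 * ⟪f j, x⟫_ℂ := by
    intro x j; rw [hT, inner_sum_orth hf]
  have hl0 : ∀ j, (lam j : ℂ) ^ 2 ≠ 0 := fun j => by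
    have := (hpos j).ne'; exact pow_ne_zero _ (by exact_mod_cast this)
  have hlinj : ∀ i j, (lam i : ℂ) ^ 2 = (lam j : ℂ) ^ 2 → i = j := by
    intro i j hij
    have : lam i ^ 2 = lam j ^ 2 := by exact_mod_cast hij
    exact hinj ((pow_left_inj₀ (hpos i).le (hpos j).le two_ne_zero).mp this)
  have hTf : ∀ j, opT (GamOf f s) (f j) = (lam j : ℂ) ^ 2 • f j := by
    intro j
    rw [hT]
    rw [Finset.sum_eq_single j]
    · rw [orthonormal_iff_ite.mp hf]; simp
    · intro i _ hij; rw [orthonormal_iff_ite.mp hf]; simp [hij]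
    · simp
  refine ⟨?_, ?_, ?_⟩
  · have hrange : LinearMap.range (GamOf f s).toLinearMap = Submodule.span ℂ (Set.range f) := by
      apply le_antisymm
      · rintro _ ⟨x, rfl⟩
        change GamOf f s x ∈ _
        rw [GamOf_apply]
        exact Submodule.sum_mem _ fun j _ =>
          Submodule.smul_mem _ _ (Submodule.subset_span ⟨j, rfl⟩)
      · rw [Submodule.span_le]
        rintro _ ⟨j, rfl⟩
        have hsj : s j ≠ 0 := by rw [← norm_pos_iff, hs]; exact hpos j
        refine ⟨(s j)⁻¹ • star (f j), ?_⟩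
        change GamOf f s _ = _
        rw [map_smul, GamOf_apply, Finset.sum_eq_single j]
        · rw [orthonormal_iff_ite.mp (orthonormal_star hf)]; simp [smul_smul, hsj]
        · intro i _ hij; rw [orthonormal_iff_ite.mp (orthonormal_star hf)]; simp [hij]
        · simp
    rw [LinearMap.rank, hrange, rank_span hf.linearIndependent,
      Cardinal.mk_range_eq _ hf.linearIndependent.injective]
    simp
  · ext z
    constructor
    · rintro ⟨hz, he⟩
      obtain ⟨v, hv⟩ := he.exists_hasEigenvector
      have hv1 : opT (GamOf f s) v = z • v := hv.apply_eq_smul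
      by_contra hcon
      have hall : ∀ j, ⟪f j, v⟫_ℂ = 0 := by
        intro j
        by_contra hj
        apply hcon
        refine ⟨j, ?_⟩
        have := hTi v j
        rw [hv1, inner_smul_right] at this
        exact (mul_right_cancel₀ hj this).symm
      have : z • v = 0 := by rw [← hv1, hT]; simp [hall]
      exact hv.2 ((smul_eq_zero.mp this).resolve_left hz)
    · rintro ⟨j, rfl⟩
      refine ⟨hl0 j, ?_⟩
      apply Module.End.hasEigenvalue_of_hasEigenvector (x := f j)
      exact Module.End.hasEigenvector_iff.mpr ⟨Module.End.mem_eigenspace_iff.mpr (hTf j), hf.ne_zero j⟩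
  · intro j
    rw [finrank_eq_one_iff']
    refine ⟨⟨f j, Module.End.mem_eigenspace_iff.mpr (hTf j)⟩, ?_, ?_⟩
    · intro h; exact hf.ne_zero j (congrArg Subtype.val h)
    · rintro ⟨v, hv⟩
      have hv1 : opT (GamOf f s) v = (lam j : ℂ) ^ 2 • v := Module.End.mem_eigenspace_iff.mp hv
      have hall : ∀ i, i ≠ j → ⟪f i, v⟫_ℂ = 0 := by
        intro i hij
        by_contra hi
        have := hTi v i
        rw [hv1, inner_smul_right] at this
        exact hij (hlinj _ _ (mul_right_cancel₀ hi this).symm)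
      refine ⟨⟪f j, v⟫_ℂ, ?_⟩
      apply Subtype.ext
      change ⟪f j, v⟫_ℂ • f j = v
      have : (lam j : ℂ) ^ 2 • v = (lam j : ℂ) ^ 2 • (⟪f j, v⟫_ℂ • f j) := by
        rw [← hv1, hT, Finset.sum_eq_single j]
        · rw [smul_smul]
        · intro i _ hij; simp [hall i hij]
        · simp
      exact (smul_right_injective _ (hl0 j) this).symm

/-! ### Hankel operators -/

lemma memlp_shift {c : ℕ → ℂ} (hc : Memℓp c 2) (n : ℕ) : Memℓp (fun p => c (n + p)) 2 := by
  have h := summable_sq_of_memℓp hc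
  have h2 : ((2 : ℝ≥0∞).toReal) = ((2 : ℕ) : ℝ) := by norm_num
  apply memℓp_gen
  rw [h2]
  simp only [Real.rpow_natCast]
  exact h.comp_injective (add_right_injective n)

lemma summable_hankel {c : ℕ → ℂ} (hc : Memℓp c 2) (n : ℕ) (x : L2) :
    Summable fun p => c (n + p) * (x : ℕ → ℂ) p := by
  have := lp.summable_inner (𝕜 := ℂ) (star (⟨_, memlp_shift hc n⟩ : L2)) x
  refine (summable_congr fun p => ?_).mp this
  rw [lp.star_apply]
  simp [mul_comm]

lemma hankel_adj {c : ℕ → ℂ} {Γ : L2 →L[ℂ] L2} (h : IsHankelOp c Γ) (y : L2) :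
    ContinuousLinearMap.adjoint Γ y = star (Γ (star y)) := by
  apply lp.ext
  funext p
  have h1 : ⟪lp.single 2 p (1 : ℂ), ContinuousLinearMap.adjoint Γ y⟫_ℂ =
      (ContinuousLinearMap.adjoint Γ y : ℕ → ℂ) p := by
    have := lp.inner_single_left (𝕜 := ℂ) p (1 : ℂ) (ContinuousLinearMap.adjoint Γ y)
    simpa using this
  rw [← h1, ContinuousLinearMap.adjoint_inner_right, lp.inner_eq_tsum, lp.star_apply, h,
    ← starRingEnd_apply, Complex.conj_tsum]
  apply tsum_congr
  intro n
  have h2 : (Γ (lp.single 2 p (1 : ℂ)) : ℕ → ℂ) n = c (n + p) := by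
    rw [h, tsum_eq_single p]
    · simp
    · intro q hq; rw [lp.single_apply_ne _ _ _ hq, mul_zero]
  rw [h2]
  simp [mul_comm, add_comm]

lemma opT_hankel {c : ℕ → ℂ} {Γ : L2 →L[ℂ] L2} (h : IsHankelOp c Γ) (y : L2) :
    opT Γ y = Γ (star (Γ (star y))) := by
  rw [opT, ContinuousLinearMap.comp_apply, hankel_adj h]

lemma hankel_shift {c : ℕ → ℂ} {Γ Γt : L2 →L[ℂ] L2} (h : IsHankelOp c Γ)
    (ht : IsHankelOp (shiftSeq c) Γt) (x : L2) (n : ℕ) :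
    (Γt x : ℕ → ℂ) n = (Γ x : ℕ → ℂ) (n + 1) := by
  rw [h, ht]
  apply tsum_congr; intro p
  simp only [shiftSeq]
  congr 2; ring

/-- the coordinate `(Γ x̄)_0` -/
lemma hankel_zero {c : ℕ → ℂ} (hc : Memℓp c 2) {Γ : L2 →L[ℂ] L2} (h : IsHankelOp c Γ) (y : L2) :
    (Γ (star y) : ℕ → ℂ) 0 = ⟪y, (⟨c, hc⟩ : L2)⟫_ℂ := by
  rw [h, lp.inner_eq_tsum]
  apply tsum_congr; intro p
  simp

lemma opT_shift {c : ℕ → ℂ} (hc : Memℓp c 2) {Γ Γt : L2 →L[ℂ] L2} (h : IsHankelOp c Γ)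
    (ht : IsHankelOp (shiftSeq c) Γt) (y : L2) :
    opT Γt y = opT Γ y - ⟪(⟨c, hc⟩ : L2), y⟫_ℂ • (⟨c, hc⟩ : L2) := by
  apply lp.ext
  funext n
  rw [opT_hankel h, opT_hankel ht, ht, lp.coeFn_sub, Pi.sub_apply, lp.coeFn_smul, Pi.smul_apply]
  have hs := summable_hankel hc n (star (Γ (star y)))
  rw [h _ n, hs.tsum_eq_zero_add, lp.star_apply, hankel_zero hc h]
  have h1 : star ⟪y, (⟨c, hc⟩ : L2)⟫_ℂ = ⟪(⟨c, hc⟩ : L2), y⟫_ℂ := inner_conj_symm _ _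
  rw [h1, add_zero]
  have h2 : ∀ p, shiftSeq c (n + p) * (star (Γt (star y)) : L2) p =
      c (n + (p + 1)) * (star (Γ (star y)) : L2) (p + 1) := by
    intro p
    rw [lp.star_apply, lp.star_apply, hankel_shift h ht]
    rfl
  rw [tsum_congr h2]
  simp only [smul_eq_mul]
  ring

end Model

namespace Model
open Matrix

variable {N : ℕ}

lemma sum_smul_apply (f : Fin N → L2) (w : Fin N → ℂ) (n : ℕ) :
    ((∑ j, w j • f j : L2) : ℕ → ℂ) n = ∑ j, w j * (f j : ℕ → ℂ) n := by
  rw [lp.coeFn_sum, Finset.sum_apply]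
  rfl

lemma isHankel_GamOf {f : Fin N → L2} {s : Fin N → ℂ} {c : ℕ → ℂ}
    (h : ∀ n p, ∑ j, s j * (f j : ℕ → ℂ) n * (f j : ℕ → ℂ) p = c (n + p)) :
    IsHankelOp c (GamOf f s) := by
  intro x n
  rw [GamOf_apply, sum_smul_apply]
  symm
  apply HasSum.tsum_eq
  have h1 : ∀ j, HasSum (fun p => (f j : ℕ → ℂ) p * (x : ℕ → ℂ) p) ⟪star (f j), x⟫_ℂ := by
    intro j
    have := lp.hasSum_inner (𝕜 := ℂ) (star (f j)) x
    have e : (fun p => ⟪(star (f j) : L2) p, (x : ℕ → ℂ) p⟫_ℂ) =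
        fun p => (f j : ℕ → ℂ) p * (x : ℕ → ℂ) p := by
      funext p
      rw [lp.star_apply]
      simp [mul_comm]
    rw [e] at this
    exact this
  have h2 : HasSum (fun p => ∑ j, s j * (f j : ℕ → ℂ) n * ((f j : ℕ → ℂ) p * (x : ℕ → ℂ) p))
      (∑ j, s j * (f j : ℕ → ℂ) n * ⟪star (f j), x⟫_ℂ) :=
    hasSum_sum fun j _ => (h1 j).mul_left _
  convert h2 using 1
  · funext p
    rw [← h, Finset.sum_mul]
    apply Finset.sum_congr rfl; intros; ring
  · apply Finset.sum_congr rfl; intros; ring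

lemma summable_geom {C r : ℝ} (hr : 0 ≤ r) (hr1 : r < 1) :
    Summable fun n : ℕ => (1 + (n : ℝ)) * (C * r ^ n) := by
  have h1 := summable_geometric_of_lt_one hr hr1
  have h2 := summable_pow_mul_geometric_of_norm_lt_one 1 (r := r)
    (by rwa [Real.norm_eq_abs, abs_of_nonneg hr])
  refine ((h1.add h2).mul_left C).congr fun n => ?_
  simp; ring

lemma summable_geom_sq {C r : ℝ} (hr : 0 ≤ r) (hr1 : r < 1) :
    Summable fun n : ℕ => (1 + (n : ℝ)) * (C * r ^ n) ^ 2 := by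
  have := summable_geom (C := C ^ 2) (r := r ^ 2) (by positivity)
    (by exact pow_lt_one₀ hr hr1 two_ne_zero)
  refine this.congr fun n => ?_
  ring

lemma inH12_of_decay {c : ℕ → ℂ} {C r : ℝ} (hr : 0 ≤ r) (hr1 : r < 1)
    (h : ∀ n, ‖c n‖ ≤ C * r ^ n) : InH12 c := by
  have hs := summable_geom_sq (C := C) hr hr1
  have hsq : ∀ n, ‖c n‖ ^ 2 ≤ (C * r ^ n) ^ 2 := fun n => by gcongr; exact h n
  constructor
  · apply memℓp_gen
    have h2 : ((2 : ℝ≥0∞).toReal) = ((2 : ℕ) : ℝ) := by norm_num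
    rw [h2]
    simp only [Real.rpow_natCast]
    refine hs.of_nonneg_of_le (fun n => by positivity) fun n => (hsq n).trans ?_
    have : (0 : ℝ) ≤ n := by positivity
    nlinarith [sq_nonneg (C * r ^ n)]
  · refine hs.of_nonneg_of_le (fun n => by positivity) fun n => ?_
    have := hsq n
    gcongr
    linarith

variable {lam mu a s : Fin N → ℝ} {O : Matrix (Fin N) (Fin N) ℝ}

lemma memlp_f (hN : 1 ≤ N) (h : SData lam mu a s O) (t : Fin N ⊕ Fin N → Circle) (j : Fin N) :
    Memℓp (fun n => rvec a O (Dth lam t) (Qth mu t) n j) 2 := by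
  obtain ⟨C, r, hC, hr, hr1, -, hf, -⟩ := decay hN h
  exact (inH12_of_decay hr hr1 fun n => hf t n j).1

def fvec (hN : 1 ≤ N) (h : SData lam mu a s O) (t : Fin N ⊕ Fin N → Circle) (j : Fin N) : L2 :=
  ⟨_, memlp_f hN h t j⟩

lemma inH12_cseq (hN : 1 ≤ N) (h : SData lam mu a s O) (t : Fin N ⊕ Fin N → Circle) :
    InH12 (cseq a O (Dth lam t) (Qth mu t)) := by
  obtain ⟨C, r, hC, hr, hr1, hc, -, -⟩ := decay hN h
  exact inH12_of_decay hr hr1 fun n => hc t n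

lemma gram_partial (h : SData lam mu a s O)
    {D Q : Fin N → ℂ} (hD : ∀ k, ‖D k‖ = lam k) (hQ : ∀ k, ‖Q k‖ = mu k) (n : ℕ) :
    ∑ m ∈ Finset.range n, vecMulVec (star (rvec a O D Q m)) (rvec a O D Q m) =
      1 - (Amat O D Q ^ n)ᴴ * Amat O D Q ^ n := by
  induction n with
  | zero => simp
  | succ n ih =>
    rw [Finset.sum_range_succ, ih, pow_succ', conjTranspose_mul]
    have h1 : (Amat O D Q ^ n)ᴴ * (Amat O D Q)ᴴ * (Amat O D Q * Amat O D Q ^ n) =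
        (Amat O D Q ^ n)ᴴ * ((Amat O D Q)ᴴ * Amat O D Q) * Amat O D Q ^ n := by
      simp only [Matrix.mul_assoc]
    have h2 : vecMulVec (star (rvec a O D Q n)) (rvec a O D Q n) =
        (Amat O D Q ^ n)ᴴ * vecMulVec (star (r0 a D)) (r0 a D) * Amat O D Q ^ n := by
      rw [mul_vecMulVec, vecMulVec_mul, rvec, star_vecMul]
    rw [h1, h2, AHA h hD hQ, Matrix.mul_sub, Matrix.sub_mul, Matrix.mul_one]
    abel

lemma orthonormal_f (hN : 1 ≤ N) (h : SData lam mu a s O) (t : Fin N ⊕ Fin N → Circle) :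
    Orthonormal ℂ (fvec hN h t) := by
  classical
  obtain ⟨C, r, hC, hr, hr1, -, -, ht⟩ := decay hN h
  set A := Amat O (Dth lam t) (Qth mu t) with hA
  have hent : ∀ k j, Filter.Tendsto (fun n => (A ^ n) k j) Filter.atTop (nhds 0) := by
    intro k j
    have h1 := ht t (Pi.single j 1)
    rw [tendsto_zero_iff_norm_tendsto_zero]
    have h2 : Filter.Tendsto (fun n => √(nsq (A ^ n *ᵥ Pi.single j 1))) Filter.atTop (nhds 0) := by
      have := (Real.continuous_sqrt.tendsto 0).comp h1
      rw [Real.sqrt_zero] at this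
      exact this
    refine squeeze_zero (fun _ => norm_nonneg _) (fun n => ?_) h2
    apply Real.le_sqrt_of_sq_le
    have := Finset.single_le_sum (f := fun k => ‖(A ^ n *ᵥ Pi.single j 1) k‖ ^ 2)
      (fun _ _ => by positivity) (Finset.mem_univ k)
    simpa [nsq] using this
  rw [orthonormal_iff_ite]
  intro i j
  have hs := (lp.hasSum_inner (𝕜 := ℂ) (fvec hN h t i) (fvec hN h t j)).tendsto_sum_nat
  refine tendsto_nhds_unique hs ?_
  have hg : ∀ n, ∑ m ∈ Finset.range n, ⟪(fvec hN h t i : ℕ → ℂ) m, (fvec hN h t j : ℕ → ℂ) m⟫_ℂ =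
      (1 : Matrix (Fin N) (Fin N) ℂ) i j - ∑ k, star ((A ^ n) k i) * (A ^ n) k j := by
    intro n
    have := congrFun (congrFun (gram_partial h (norm_Dth h t) (norm_Qth h t) n) i) j
    rw [Matrix.sum_apply, Matrix.sub_apply, Matrix.mul_apply] at this
    simp only [conjTranspose_apply] at this
    rw [← this]
    apply Finset.sum_congr rfl
    intro m _
    rw [vecMulVec_apply]
    simp [fvec, mul_comm]
  rw [show (fun n => ∑ m ∈ Finset.range n,
    ⟪(fvec hN h t i : ℕ → ℂ) m, (fvec hN h t j : ℕ → ℂ) m⟫_ℂ) = _ from funext hg]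
  have hlim : Filter.Tendsto (fun n => (1 : Matrix (Fin N) (Fin N) ℂ) i j -
      ∑ k, star ((A ^ n) k i) * (A ^ n) k j) Filter.atTop
      (nhds ((1 : Matrix (Fin N) (Fin N) ℂ) i j - ∑ k : Fin N, star (0 : ℂ) * 0)) := by
    refine Filter.Tendsto.sub tendsto_const_nhds (tendsto_finsetSum _ fun k _ => ?_)
    exact ((hent k i).star).mul (hent k j)
  simpa [Matrix.one_apply] using hlim

/-- rotated family -/
def gOf (O : Matrix (Fin N) (Fin N) ℝ) (f : Fin N → L2) (k : Fin N) : L2 :=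
  ∑ j, (O j k : ℂ) • f j

lemma orthonormal_gOf (h : SData lam mu a s O) {f : Fin N → L2} (hf : Orthonormal ℂ f) :
    Orthonormal ℂ (gOf O f) := by
  classical
  rw [orthonormal_iff_ite]
  intro k l
  have h1 := congrFun (congrFun (Oc_T_mul h) k) l
  rw [Matrix.mul_apply, Matrix.one_apply] at h1
  rw [← h1, gOf, sum_inner]
  apply Finset.sum_congr rfl
  intro j _
  rw [inner_smul_left, gOf, inner_sum_orth hf]
  simp [Oc]

lemma f_of_gOf (h : SData lam mu a s O) (f : Fin N → L2) (j : Fin N) :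
    f j = ∑ k, (O j k : ℂ) • gOf O f k := by
  classical
  simp only [gOf, Finset.smul_sum, smul_smul]
  rw [Finset.sum_comm]
  simp only [← Finset.sum_smul]
  have h1 : ∀ i, ∑ k, (O j k : ℂ) * (O i k : ℂ) = if j = i then 1 else 0 := by
    intro i
    have h1 := congrFun (congrFun (Oc_mul_T h) j) i
    rw [Matrix.mul_apply, Matrix.one_apply] at h1
    rw [← h1]; rfl
  simp [h1]

lemma hankel_f (hN : 1 ≤ N) (h : SData lam mu a s O) (t : Fin N ⊕ Fin N → Circle) :
    IsHankelOp (cseq a O (Dth lam t) (Qth mu t)) (GamOf (fvec hN h t) (Dth lam t)) := by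
  apply isHankel_GamOf
  intro n p
  rw [← hankel1 h (norm_Dth h t), dotProduct]
  apply Finset.sum_congr rfl
  intro j _
  rw [mulVec_diagonal]
  simp only [fvec]
  ring

lemma hankel_g (hN : 1 ≤ N) (h : SData lam mu a s O) (t : Fin N ⊕ Fin N → Circle) :
    IsHankelOp (shiftSeq (cseq a O (Dth lam t) (Qth mu t)))
      (GamOf (gOf O (fvec hN h t)) (Qth mu t)) := by
  apply isHankel_GamOf
  intro n p
  have := hankel2 (Q := Qth mu t) h (norm_Dth h t) n p
  rw [shiftSeq, ← this, Kmat, Matrix.mul_assoc, ← mulVec_mulVec, dotProduct_mulVec,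
    ← mulVec_mulVec, dotProduct]
  apply Finset.sum_congr rfl
  intro k _
  rw [mulVec_diagonal, gOf, sum_smul_apply, sum_smul_apply, mulVec_transpose]
  simp only [vecMul, dotProduct, fvec, Oc, Matrix.map_apply]
  have e : ∀ m, ∑ j, (O j k : ℂ) * rvec a O (Dth lam t) (Qth mu t) m j =
    ∑ j, rvec a O (Dth lam t) (Qth mu t) m j * (O j k : ℂ) := fun m =>
      Finset.sum_congr rfl fun j _ => mul_comm _ _
  rw [e, e]; ring

lemma GamOf_star {f : Fin N → L2} (hf : Orthonormal ℂ f) (w : Fin N → ℂ) (j : Fin N) :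
    GamOf f w (star (f j)) = w j • f j := by
  classical
  rw [GamOf_apply, Finset.sum_eq_single j]
  · rw [orthonormal_iff_ite.mp (orthonormal_star hf)]; simp
  · intro i _ hij; rw [orthonormal_iff_ite.mp (orthonormal_star hf)]; simp [hij]
  · simp

/-- The target set -/
def Tset (N : ℕ) (lam mu : Fin N → ℝ) (c : H12) : Prop :=
  ∃ Γ Γt : L2 →L[ℂ] L2,
          IsHankelOp c.1 Γ ∧ IsHankelOp (shiftSeq c.1) Γt ∧
          HasSimpleSVals Γ N lam ∧ HasSimpleSVals Γt N mu

def Phi (hN : 1 ≤ N) (h : SData lam mu a s O) (t : Fin N ⊕ Fin N → Circle) : H12 :=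
  ⟨cseq a O (Dth lam t) (Qth mu t), inH12_cseq hN h t⟩

lemma Phi_mem (hN : 1 ≤ N) (h : SData lam mu a s O) (t : Fin N ⊕ Fin N → Circle) :
    Tset N lam mu (Phi hN h t) :=
  ⟨_, _, hankel_f hN h t, hankel_g hN h t,
    svals_GamOf (orthonormal_f hN h t) (norm_Dth h t) h.lpos h.linj,
    svals_GamOf (orthonormal_gOf h (orthonormal_f hN h t)) (norm_Qth h t) h.mpos h.minj⟩

lemma continuous_Phi (hN : 1 ≤ N) (h : SData lam mu a s O) : Continuous (Phi hN h) := by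
  have hind : Topology.IsInducing H12.toL2 := ⟨rfl⟩
  rw [hind.continuous_iff]
  obtain ⟨C, r, hC, hr, hr1, hc, -, -⟩ := decay hN h
  have he : (H12.toL2 ∘ Phi hN h) = fun t => ∑' n, lp.single (E := fun _ : ℕ => ℂ) 2 n
      (wSeq (cseq a O (Dth lam t) (Qth mu t)) n) := by
    funext t
    have := lp.hasSum_single (E := fun _ : ℕ => ℂ) (p := 2) (by norm_num) (H12.toL2 (Phi hN h t))
    exact this.tsum_eq.symm
  rw [he]
  refine continuous_tsum (fun n => ?_) (summable_geom (C := C) hr hr1) ?_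
  · refine (lp.isometry_single n).continuous.comp ?_
    unfold wSeq
    exact continuous_const.mul (continuous_cseq h n)
  · intro n t
    rw [lp.norm_single (by norm_num), wSeq, norm_mul, Complex.norm_real, Real.norm_eq_abs,
      abs_of_nonneg (Real.sqrt_nonneg _)]
    gcongr
    · rw [Real.sqrt_le_left (by positivity)]
      have : (0 : ℝ) ≤ n := by positivity
      nlinarith
    · exact hc t n

end Model

namespace Model
open Matrix

variable {N : ℕ}
variable {lam mu a s : Fin N → ℝ} {O : Matrix (Fin N) (Fin N) ℝ}

lemma hankel_unique {c : ℕ → ℂ} {Γ Γ' : L2 →L[ℂ] L2} (h : IsHankelOp c Γ) (h' : IsHankelOp c Γ') :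
    Γ = Γ' := by
  ext x n
  rw [h, h']

lemma opT_GamOf_self {f : Fin N → L2} (hf : Orthonormal ℂ f) (w : Fin N → ℂ) (j : Fin N) :
    opT (GamOf f w) (f j) = ((‖w j‖ : ℂ)) ^ 2 • f j := by
  classical
  rw [opT_GamOf hf, Finset.sum_eq_single j]
  · rw [orthonormal_iff_ite.mp hf]; simp
  · intro i _ hij; rw [orthonormal_iff_ite.mp hf]; simp [hij]
  · simp

lemma c_eq_sum (hN : 1 ≤ N) (h : SData lam mu a s O) (t : Fin N ⊕ Fin N → Circle) :
    (⟨(Phi hN h t).1, (Phi hN h t).2.1⟩ : L2) = ∑ j, (a j : ℂ) • fvec hN h t j := by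
  apply lp.ext
  funext n
  rw [sum_smul_apply]
  change rvec a O _ _ n ⬝ᵥ ac a = _
  rw [dotProduct]
  apply Finset.sum_congr rfl
  intro j _
  exact mul_comm _ _

lemma sq_inj {lam : Fin N → ℝ} (hpos : ∀ j, 0 < lam j) (hinj : Function.Injective lam) (i j : Fin N)
    (hij : (lam i : ℂ) ^ 2 = (lam j : ℂ) ^ 2) : i = j := by
  have : lam i ^ 2 = lam j ^ 2 := by exact_mod_cast hij
  exact hinj ((pow_left_inj₀ (hpos i).le (hpos j).le two_ne_zero).mp this)

lemma Phi_inj (hN : 1 ≤ N) (h : SData lam mu a s O) : Function.Injective (Phi hN h) := by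
  intro t t' htt
  have hcc : cseq a O (Dth lam t) (Qth mu t) = cseq a O (Dth lam t') (Qth mu t') :=
    congrArg Subtype.val htt
  have hf := orthonormal_f hN h t
  have hf' := orthonormal_f hN h t'
  have hG : GamOf (fvec hN h t) (Dth lam t) = GamOf (fvec hN h t') (Dth lam t') := by
    have h1 := hankel_f hN h t
    rw [hcc] at h1
    exact hankel_unique h1 (hankel_f hN h t')
  have hGt : GamOf (gOf O (fvec hN h t)) (Qth mu t) = GamOf (gOf O (fvec hN h t')) (Qth mu t') := by
    have h1 := hankel_g hN h t
    rw [hcc] at h1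
    exact hankel_unique h1 (hankel_g hN h t')
  have horth : ∀ i j, i ≠ j → ⟪fvec hN h t i, fvec hN h t' j⟫_ℂ = 0 := by
    intro i j hij
    by_contra hne
    have e1 : ⟪fvec hN h t i, opT (GamOf (fvec hN h t) (Dth lam t)) (fvec hN h t' j)⟫_ℂ =
        (lam i : ℂ) ^ 2 * ⟪fvec hN h t i, fvec hN h t' j⟫_ℂ := by
      rw [opT_GamOf hf, inner_sum_orth hf, norm_Dth h]
    rw [hG, opT_GamOf_self hf', norm_Dth h, inner_smul_right] at e1
    exact hij (sq_inj h.lpos h.linj _ _ (mul_right_cancel₀ hne e1).symm)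
  have hff : fvec hN h t = fvec hN h t' := by
    funext j
    have e1 : ∑ j, (a j : ℂ) • fvec hN h t j = ∑ j, (a j : ℂ) • fvec hN h t' j := by
      rw [← c_eq_sum, ← c_eq_sum]
      simp only [htt]
    have e2 := congrArg (fun x => ⟪fvec hN h t j, x⟫_ℂ) e1
    rw [inner_sum_orth hf, inner_sum, Finset.sum_eq_single j, inner_smul_right] at e2
    · have ha : (a j : ℂ) ≠ 0 := by exact_mod_cast (h.apos j).ne'
      have e3 : ⟪fvec hN h t j, fvec hN h t' j⟫_ℂ = 1 := by
        apply mul_left_cancel₀ ha; rw [← e2, mul_one]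
      exact (inner_eq_one_iff_of_norm_eq_one (hf.1 j) (hf'.1 j)).mp e3
    · intro i _ hij
      rw [inner_smul_right, horth _ _ hij.symm, mul_zero]
    · simp
  have hD : ∀ j, Dth lam t j = Dth lam t' j := by
    intro j
    have e := GamOf_star hf (Dth lam t) j
    rw [hG, hff, GamOf_star hf'] at e
    exact (smul_left_injective ℂ (hf'.ne_zero j) e).symm
  have hg' := orthonormal_gOf h hf'
  have hQ : ∀ j, Qth mu t j = Qth mu t' j := by
    intro j
    have e := GamOf_star (orthonormal_gOf h hf) (Qth mu t) j
    rw [hGt, hff, GamOf_star hg'] at e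
    exact (smul_left_injective ℂ (hg'.ne_zero j) e).symm
  funext x
  rcases x with j | j
  · have ha : (lam j : ℂ) ≠ 0 := by exact_mod_cast (h.lpos j).ne'
    exact Subtype.ext (mul_left_cancel₀ ha (hD j))
  · have ha : (mu j : ℂ) ≠ 0 := by exact_mod_cast (h.mpos j).ne'
    exact Subtype.ext (mul_left_cancel₀ ha (hQ j))

end Model

namespace Model
open Matrix

variable {N : ℕ}
variable {lam mu a s : Fin N → ℝ} {O : Matrix (Fin N) (Fin N) ℝ}

lemma opT_symm (Γ : L2 →L[ℂ] L2) (x y : L2) : ⟪x, opT Γ y⟫_ℂ = ⟪opT Γ x, y⟫_ℂ := by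
  rw [opT, ContinuousLinearMap.comp_apply, ContinuousLinearMap.comp_apply,
    ← ContinuousLinearMap.adjoint_inner_left, ContinuousLinearMap.adjoint_inner_right]

lemma eig_1d {T : L2 →L[ℂ] L2} {z : ℂ}
    (h1 : Module.finrank ℂ (Module.End.eigenspace T.toLinearMap z) = 1)
    {v w : L2} (hv0 : v ≠ 0) (hv : T v = z • v) (hw : T w = z • w) : ∃ d : ℂ, w = d • v := by
  have := (finrank_eq_one_iff_of_nonzero'
    (⟨v, Module.End.mem_eigenspace_iff.mpr hv⟩ : Module.End.eigenspace T.toLinearMap z)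
    (fun h => hv0 (congrArg Subtype.val h))).mp h1 ⟨w, Module.End.mem_eigenspace_iff.mpr hw⟩
  obtain ⟨d, hd⟩ := this
  exact ⟨d, (congrArg Subtype.val hd).symm⟩

lemma exists_unit_eig {Γ : L2 →L[ℂ] L2} (hS : HasSimpleSVals Γ N lam) (j : Fin N) :
    ∃ v : L2, ‖v‖ = 1 ∧ opT Γ v = (lam j : ℂ) ^ 2 • v := by
  have hj : ((lam j : ℂ)) ^ 2 ∈ {z : ℂ | z ≠ 0 ∧ Module.End.HasEigenvalue (opT Γ).toLinearMap z} := by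
    rw [hS.2.1]; exact ⟨j, rfl⟩
  obtain ⟨v, hv⟩ := hj.2.exists_hasEigenvector
  have hv1 : opT Γ v = (lam j : ℂ) ^ 2 • v := hv.apply_eq_smul
  refine ⟨((‖v‖ : ℂ))⁻¹ • v, ?_, ?_⟩
  · have := norm_pos_iff.mpr hv.2
    rw [norm_smul, norm_inv, Complex.norm_real, norm_norm, inv_mul_cancel₀ this.ne']
  · rw [map_smul, hv1, smul_comm]

lemma exists_eigvecs {Γ : L2 →L[ℂ] L2} (hS : HasSimpleSVals Γ N lam)
    (hpos : ∀ j, 0 < lam j) (hinj : Function.Injective lam) :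
    ∃ f : Fin N → L2, Orthonormal ℂ f ∧ (∀ j, opT Γ (f j) = (lam j : ℂ) ^ 2 • f j) ∧
      ∀ x, Γ x ∈ Submodule.span ℂ (Set.range f) := by
  choose f hf1 hf2 using exists_unit_eig hS
  have hon : Orthonormal ℂ f := by
    refine ⟨hf1, fun i j hij => ?_⟩
    by_contra hne
    have e := opT_symm Γ (f i) (f j)
    rw [hf2, hf2, inner_smul_left, inner_smul_right] at e
    have e2 := mul_right_cancel₀ hne e
    rw [← Complex.ofReal_pow, ← Complex.ofReal_pow, Complex.conj_ofReal] at e2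
    push_cast at e2
    exact hij (sq_inj hpos hinj _ _ e2).symm
  refine ⟨f, hon, hf2, ?_⟩
  have hle : Submodule.span ℂ (Set.range f) ≤ LinearMap.range Γ.toLinearMap := by
    rw [Submodule.span_le]
    rintro _ ⟨j, rfl⟩
    have hl : ((lam j : ℂ)) ^ 2 ≠ 0 := pow_ne_zero _ (by exact_mod_cast (hpos j).ne')
    refine ⟨(((lam j : ℂ)) ^ 2)⁻¹ • ContinuousLinearMap.adjoint Γ (f j), ?_⟩
    change Γ _ = _
    rw [map_smul]
    change _ • opT Γ (f j) = _
    rw [hf2, smul_smul, inv_mul_cancel₀ hl, one_smul]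
  have hr : Module.rank ℂ (LinearMap.range Γ.toLinearMap) = N := hS.1
  have hfin : FiniteDimensional ℂ (LinearMap.range Γ.toLinearMap) :=
    Module.rank_lt_aleph0_iff.mp (by rw [hr]; exact Cardinal.natCast_lt_aleph0)
  have heq := Submodule.eq_of_le_of_finrank_eq hle (by
    rw [finrank_span_eq_card hon.linearIndependent, Fintype.card_fin,
      Module.finrank_eq_of_rank_eq hr])
  intro x
  rw [heq]
  exact ⟨x, rfl⟩

lemma expand {f : Fin N → L2} (hf : Orthonormal ℂ f) {x : L2}
    (hx : x ∈ Submodule.span ℂ (Set.range f)) : x = ∑ j, ⟪f j, x⟫_ℂ • f j := by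
  obtain ⟨w, rfl⟩ := (Submodule.mem_span_range_iff_exists_fun ℂ).mp hx
  simp only [inner_sum_orth hf]

lemma hankel_e0 {c : ℕ → ℂ} (hc : Memℓp c 2) {Γ : L2 →L[ℂ] L2} (h : IsHankelOp c Γ) :
    Γ e0 = ⟨c, hc⟩ := by
  apply lp.ext
  funext n
  rw [h, tsum_eq_single 0]
  · simp [e0]
  · intro q hq
    rw [e0, lp.single_apply_ne _ _ _ hq, mul_zero]

lemma abs_unique (h : SData lam mu a s O) {b : Fin N → ℝ}
    (hb : ∀ k, ∑ j, b j / (lam j ^ 2 - mu k ^ 2) = 1) (j : Fin N) : b j = a j ^ 2 := by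
  set d : Fin N → ℝ := fun j => (b j - a j ^ 2) / a j with hd
  have h1 : d ᵥ* O = 0 := by
    funext k
    simp only [vecMul, dotProduct, Pi.zero_apply]
    have : ∀ j, d j * O j k = s k * (b j / (lam j ^ 2 - mu k ^ 2) - a j ^ 2 / (lam j ^ 2 - mu k ^ 2)) := by
      intro j
      have := (h.apos j).ne'
      have := h.lmne j k
      rw [h.hO, hd]; field_simp
    simp only [this]
    rw [← Finset.mul_sum, Finset.sum_sub_distrib, hb, h.hsum]; simp
  have h2 : d = 0 := by
    have : (d ᵥ* O) ᵥ* O.transpose = d := by rw [vecMul_vecMul, h.OOT, vecMul_one]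
    rw [← this, h1, zero_vecMul]
  have h3 : (b j - a j ^ 2) / a j = 0 := congrFun h2 j
  rcases div_eq_zero_iff.mp h3 with h4 | h4
  · linarith
  · exact absurd h4 (h.apos j).ne'

lemma norm_coeff (h : SData lam mu a s O) {c : ℕ → ℂ} (hc : Memℓp c 2) {Γ Γt : L2 →L[ℂ] L2}
    (hG : IsHankelOp c Γ) (hGt : IsHankelOp (shiftSeq c) Γt) (hS : HasSimpleSVals Γ N lam)
    (hSt : HasSimpleSVals Γt N mu) {f : Fin N → L2}
    (hf2 : ∀ j, opT Γ (f j) = (lam j : ℂ) ^ 2 • f j)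
    (hcs : (⟨c, hc⟩ : L2) = ∑ j, ⟪f j, (⟨c, hc⟩ : L2)⟫_ℂ • f j) (j : Fin N) :
    ‖⟪f j, (⟨c, hc⟩ : L2)⟫_ℂ‖ = a j := by
  have key : ‖⟪f j, (⟨c, hc⟩ : L2)⟫_ℂ‖ ^ 2 = a j ^ 2 := by
    refine abs_unique h (b := fun j => ‖⟪f j, (⟨c, hc⟩ : L2)⟫_ℂ‖ ^ 2) (fun k => ?_) j
    obtain ⟨g, hg1, hg2⟩ := exists_unit_eig hSt k
    rw [opT_shift hc hG hGt] at hg2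
    have hg0 : g ≠ 0 := by rintro rfl; simp at hg1
    set cv : L2 := ⟨c, hc⟩ with hcv
    have hm : ((mu k : ℂ)) ^ 2 ≠ 0 := pow_ne_zero _ (by exact_mod_cast (h.mpos k).ne')
    have hne : ⟪cv, g⟫_ℂ ≠ 0 := by
      intro h0
      rw [h0, zero_smul, sub_zero] at hg2
      have : ((mu k : ℂ)) ^ 2 ∈
          {z : ℂ | z ≠ 0 ∧ Module.End.HasEigenvalue (opT Γ).toLinearMap z} :=
        ⟨hm, Module.End.hasEigenvalue_of_hasEigenvector (x := g)
          (Module.End.hasEigenvector_iff.mpr ⟨Module.End.mem_eigenspace_iff.mpr hg2, hg0⟩)⟩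
      rw [hS.2.1] at this
      obtain ⟨i, hi⟩ := this
      apply h.lmne i k
      have : lam i ^ 2 = mu k ^ 2 := by
        have hi' : (lam i : ℂ) ^ 2 = (mu k : ℂ) ^ 2 := hi
        exact_mod_cast hi'
      linarith
    have hcomp : ∀ i, ⟪f i, g⟫_ℂ = ⟪cv, g⟫_ℂ * ⟪f i, cv⟫_ℂ / (((lam i ^ 2 - mu k ^ 2 : ℝ)) : ℂ) := by
      intro i
      have e := congrArg (fun x => ⟪f i, x⟫_ℂ) hg2
      simp only [inner_sub_right, inner_smul_right] at e
      rw [opT_symm, hf2, inner_smul_left, ← Complex.ofReal_pow, Complex.conj_ofReal] at e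
      rw [eq_div_iff (by exact_mod_cast h.lmne i k)]
      push_cast at e ⊢
      linear_combination e
    have e1 : ⟪cv, g⟫_ℂ = ∑ i, conj ⟪f i, cv⟫_ℂ * ⟪f i, g⟫_ℂ := by
      conv_lhs => rw [hcs]
      rw [sum_inner]
      simp only [inner_smul_left]
    have e2 : ⟪cv, g⟫_ℂ = ⟪cv, g⟫_ℂ *
        ((∑ i, ‖⟪f i, cv⟫_ℂ‖ ^ 2 / (lam i ^ 2 - mu k ^ 2) : ℝ) : ℂ) := by
      conv_lhs => rw [e1]
      rw [Complex.ofReal_sum, Finset.mul_sum]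
      apply Finset.sum_congr rfl
      intro i _
      rw [hcomp, Complex.ofReal_div, Complex.ofReal_pow, ← Complex.conj_mul']
      ring
    have e3 := mul_left_cancel₀ hne ((mul_one _).trans e2)
    exact_mod_cast e3.symm
  exact (pow_left_inj₀ (norm_nonneg _) (h.apos j).le two_ne_zero).mp key

/-- normalised eigenvectors -/
lemma exists_normalised (h : SData lam mu a s O) {c : ℕ → ℂ} (hc : Memℓp c 2) {Γ Γt : L2 →L[ℂ] L2}
    (hG : IsHankelOp c Γ) (hGt : IsHankelOp (shiftSeq c) Γt) (hS : HasSimpleSVals Γ N lam)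
    (hSt : HasSimpleSVals Γt N mu) :
    ∃ f : Fin N → L2, Orthonormal ℂ f ∧ (∀ j, opT Γ (f j) = (lam j : ℂ) ^ 2 • f j) ∧
      (∀ j, ⟪f j, (⟨c, hc⟩ : L2)⟫_ℂ = (a j : ℂ)) ∧
      (⟨c, hc⟩ : L2) = ∑ j, (a j : ℂ) • f j := by
  classical
  obtain ⟨f, hf, hf2, hsp⟩ := exists_eigvecs hS h.lpos h.linj
  have hcs : (⟨c, hc⟩ : L2) = ∑ j, ⟪f j, (⟨c, hc⟩ : L2)⟫_ℂ • f j :=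
    expand hf (by rw [← hankel_e0 hc hG]; exact hsp _)
  have hnc := norm_coeff h hc hG hGt hS hSt hf2 hcs
  set cv : L2 := ⟨c, hc⟩ with hcv
  have ha : ∀ j, (a j : ℂ) ≠ 0 := fun j => by exact_mod_cast (h.apos j).ne'
  set u : Fin N → ℂ := fun j => ⟪f j, cv⟫_ℂ / a j with hu
  have hun : ∀ j, ‖u j‖ = 1 := by
    intro j
    rw [hu]
    simp only [norm_div, hnc, Complex.norm_real, Real.norm_eq_abs, abs_of_pos (h.apos j)]
    exact div_self (h.apos j).ne'
  have hsum : cv = ∑ j, (a j : ℂ) • (u j • f j) := by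
    conv_lhs => rw [hcs]
    apply Finset.sum_congr rfl
    intro j _
    rw [smul_smul, hu]
    congr 1
    have := ha j
    field_simp
  have hon : Orthonormal ℂ (fun j => u j • f j) := by
    rw [orthonormal_iff_ite] at hf ⊢
    intro i j
    rw [inner_smul_left, inner_smul_right, hf]
    by_cases hij : i = j
    · subst hij
      simp [Complex.conj_mul', hun]
    · simp [hij]
  refine ⟨fun j => u j • f j, hon, ?_, ?_, hsum⟩
  · intro j
    rw [map_smul, hf2, smul_comm]
  · intro j
    conv_lhs => rw [hsum]
    exact inner_sum_orth hon _ j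

lemma opT_gOf (h : SData lam mu a s O) {c : ℕ → ℂ} (hc : Memℓp c 2) {Γ Γt : L2 →L[ℂ] L2}
    (hG : IsHankelOp c Γ) (hGt : IsHankelOp (shiftSeq c) Γt) {f : Fin N → L2}
    (hf : Orthonormal ℂ f)
    (hf2 : ∀ j, opT Γ (f j) = (lam j : ℂ) ^ 2 • f j)
    (hcs : (⟨c, hc⟩ : L2) = ∑ j, (a j : ℂ) • f j) (k : Fin N) :
    opT Γt (gOf O f k) = (mu k : ℂ) ^ 2 • gOf O f k := by
  rw [opT_shift hc hG hGt]
  have hs : ⟪(⟨c, hc⟩ : L2), gOf O f k⟫_ℂ = (s k : ℂ) := by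
    rw [hcs, sum_inner, ← sum_aO h k, Complex.ofReal_sum]
    apply Finset.sum_congr rfl
    intro j _
    rw [inner_smul_left, gOf, inner_sum_orth hf, Complex.conj_ofReal, Complex.ofReal_mul]
  rw [hs, hcs, gOf, map_sum, Finset.smul_sum, Finset.smul_sum, ← Finset.sum_sub_distrib]
  apply Finset.sum_congr rfl
  intro j _
  rw [map_smul, hf2, smul_smul, smul_smul, smul_smul, ← sub_smul]
  congr 1
  have := h.lmne j k
  have e : O j k * (lam j ^ 2 - mu k ^ 2) = a j * s k := by
    rw [h.hO]; field_simp
  have eqc : (O j k : ℂ) * ((lam j : ℂ) ^ 2 - (mu k : ℂ) ^ 2) = a j * s k := by exact_mod_cast e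
  linear_combination eqc

/-- antilinear square root on a simple eigenspace -/
lemma hankel_eig {c : ℕ → ℂ} {Γ : L2 →L[ℂ] L2} {nu : Fin N → ℝ}
    (hG : IsHankelOp c Γ) (hS : HasSimpleSVals Γ N nu) (hpos : ∀ j, 0 < nu j)
    {v : L2} (hv0 : v ≠ 0) {j : Fin N} (hv : opT Γ v = (nu j : ℂ) ^ 2 • v) :
    ∃ d : ℂ, ‖d‖ = nu j ∧ Γ (star v) = d • v := by
  have hw : opT Γ (Γ (star v)) = (nu j : ℂ) ^ 2 • Γ (star v) := by
    rw [opT_hankel hG, ← opT_hankel hG v, hv, star_smul, map_smul]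
    congr 1
    simp
  obtain ⟨d, hd⟩ := eig_1d (hS.2.2 j) hv0 hv hw
  refine ⟨d, ?_, hd⟩
  have e := hv
  rw [opT_hankel hG, hd, star_smul, map_smul, hd, smul_smul] at e
  have e2 : star d * d = (nu j : ℂ) ^ 2 := smul_left_injective ℂ hv0 e
  have e3 : (‖d‖ : ℂ) ^ 2 = (nu j : ℂ) ^ 2 := by rw [← e2, ← Complex.conj_mul']; rfl
  have e4 : ‖d‖ ^ 2 = nu j ^ 2 := by exact_mod_cast e3
  exact (pow_left_inj₀ (norm_nonneg _) (hpos j).le two_ne_zero).mp e4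

lemma Phi_surj (hN : 1 ≤ N) (h : SData lam mu a s O) (c : H12) (hT : Tset N lam mu c) :
    ∃ t, Phi hN h t = c := by
  classical
  obtain ⟨Γ, Γt, hG, hGt, hS, hSt⟩ := hT
  have hc := c.2.1
  obtain ⟨f, hf, hf2, hfa, hcs⟩ := exists_normalised h hc hG hGt hS hSt
  have hg := orthonormal_gOf h hf
  have hg2 := opT_gOf h hc hG hGt hf hf2 hcs
  choose D hDn hD using fun j => hankel_eig hG hS h.lpos (hf.ne_zero j) (hf2 j)
  choose Q hQn hQ using fun j => hankel_eig hGt hSt h.mpos (hg.ne_zero j) (hg2 j)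
  have hl : ∀ j, (lam j : ℂ) ≠ 0 := fun j => by exact_mod_cast (h.lpos j).ne'
  have hm : ∀ j, (mu j : ℂ) ≠ 0 := fun j => by exact_mod_cast (h.mpos j).ne'
  let t : Fin N ⊕ Fin N → Circle := Sum.elim
    (fun j => ⟨D j / lam j, by
      rw [← SetLike.mem_coe, Submonoid.coe_unitSphere, mem_sphere_zero_iff_norm, norm_div, hDn, Complex.norm_real, Real.norm_eq_abs,
        abs_of_pos (h.lpos j)]
      exact div_self (h.lpos j).ne'⟩)
    (fun j => ⟨Q j / mu j, by
      rw [← SetLike.mem_coe, Submonoid.coe_unitSphere, mem_sphere_zero_iff_norm, norm_div, hQn, Complex.norm_real, Real.norm_eq_abs,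
        abs_of_pos (h.mpos j)]
      exact div_self (h.mpos j).ne'⟩)
  have htD : Dth lam t = D := by
    funext j
    change (lam j : ℂ) * (D j / lam j) = D j
    have := hl j
    field_simp
  have htQ : Qth mu t = Q := by
    funext j
    change (mu j : ℂ) * (Q j / mu j) = Q j
    have := hm j
    field_simp
  refine ⟨t, Subtype.ext ?_⟩
  change cseq a O (Dth lam t) (Qth mu t) = c.1
  rw [htD, htQ]
  have hDne : ∀ j, D j ≠ 0 := Dne h hDn
  have hKf : ∀ j, Γt (star (f j)) = ∑ i, Kmat O Q i j • f i := by
    intro j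
    conv_lhs => rw [f_of_gOf h f j]
    rw [star_sum, map_sum]
    have e1 : ∀ k, Γt (star ((O j k : ℂ) • gOf O f k)) =
        ∑ i, ((O j k : ℂ) * Q k * (O i k : ℂ)) • f i := by
      intro k
      rw [star_smul, map_smul, hQ, gOf, smul_smul, Finset.smul_sum]
      apply Finset.sum_congr rfl
      intro i _
      rw [smul_smul]
      congr 2
      simp
    simp only [e1]
    rw [Finset.sum_comm]
    apply Finset.sum_congr rfl
    intro i _
    rw [← Finset.sum_smul]
    congr 1
    rw [Kmat, Matrix.mul_apply]
    apply Finset.sum_congr rfl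
    intro k _
    rw [mul_diagonal]
    simp [Oc]; ring
  have hrec : ∀ n j, (f j : ℕ → ℂ) n = rvec a O D Q n j := by
    intro n
    induction n with
    | zero =>
      intro j
      have e := hankel_zero hc hG (f j)
      rw [hD, hfa, lp.coeFn_smul, Pi.smul_apply, smul_eq_mul] at e
      have := hDne j
      simp only [rvec, pow_zero, vecMul_one, r0]
      rw [← e]; field_simp
    | succ n ih =>
      intro j
      have e := hankel_shift hG hGt (star (f j)) n
      rw [hD, hKf, sum_smul_apply, lp.coeFn_smul, Pi.smul_apply, smul_eq_mul] at e
      rw [rvec_succ]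
      have := hDne j
      apply mul_left_cancel₀ this
      rw [← e, vecMul, dotProduct, Finset.mul_sum]
      apply Finset.sum_congr rfl
      intro i _
      rw [ih, Amat, mul_diagonal]
      field_simp
  funext n
  have e := congrArg (fun x : L2 => (x : ℕ → ℂ) n) hcs
  simp only [sum_smul_apply] at e
  rw [cseq, dotProduct]
  refine Eq.trans ?_ e.symm
  apply Finset.sum_congr rfl
  intro j _
  rw [hrec, ac, mul_comm]

lemma main (N : ℕ) (hN : 1 ≤ N) (lam mu : Fin N → ℝ)
    (h1 : ∀ j : Fin N, mu j < lam j)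
    (h2 : ∀ j k : Fin N, (j : ℕ) + 1 = (k : ℕ) → lam k < mu j)
    (h3 : ∀ j : Fin N, 0 < mu j) :
    Nonempty ({c : H12 // Tset N lam mu c} ≃ₜ (Fin (2 * N) → AddCircle (2 * Real.pi))) := by
  have h2' : ∀ j k : Fin N, j < k → lam k < mu j := by
    have : ∀ (d : ℕ) (j k : Fin N), (j : ℕ) + 1 + d = k → lam k < mu j := by
      intro d
      induction d with
      | zero => intro j k hjk; exact h2 j k hjk
      | succ d ih =>
        intro j k hjk
        have hk := k.2
        have e1 := ih j ⟨(j : ℕ) + 1 + d, by omega⟩ rfl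
        have e2 := h2 ⟨(j : ℕ) + 1 + d, by omega⟩ k (by simp only; omega)
        exact (e2.trans (h1 _)).trans e1
    intro j k hjk
    have : (j : ℕ) < k := hjk
    exact ‹∀ (d : ℕ) (j k : Fin N), (j : ℕ) + 1 + d = k → lam k < mu j› (k - j - 1) j k (by omega)
  have lpos : ∀ j, 0 < lam j := fun j => (h3 j).trans (h1 j)
  obtain ⟨a, s, O, ha, hs, hO, hsum, hOTO, hOOT⟩ := exists_data N lam mu h1 h2' h3
  have hlanti : StrictAnti lam := fun j k hjk => (h2' j k hjk).trans (h1 j)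
  have hmanti : StrictAnti mu := fun j k hjk => (h1 k).trans (h2' j k hjk)
  have hlm : ∀ j k, lam j ^ 2 - mu k ^ 2 ≠ 0 := by
    intro j k hjk
    have e : lam j ^ 2 = mu k ^ 2 := by linarith
    have e' := (pow_left_inj₀ (lpos j).le (h3 k).le two_ne_zero).mp e
    rcases le_or_gt j k with hle | hlt
    · have := hmanti.antitone hle
      have := h1 j
      linarith
    · have := h2' k j hlt
      linarith
  have h : SData lam mu a s O :=
    { lpos := lpos, mpos := h3, linj := hlanti.injective, minj := hmanti.injective, lmne := hlm,
      apos := ha, spos := hs, hO := hO, hsum := hsum, OTO := hOTO, OOT := hOOT }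
  let F : (Fin N ⊕ Fin N → Circle) → {c : H12 // Tset N lam mu c} :=
    fun t => ⟨Phi hN h t, Phi_mem hN h t⟩
  have hFc : Continuous F := (continuous_Phi hN h).subtype_mk _
  have hFb : Function.Bijective F := by
    constructor
    · intro t t' htt
      exact Phi_inj hN h (congrArg Subtype.val htt)
    · rintro ⟨c, hc⟩
      obtain ⟨t, ht⟩ := Phi_surj hN h c hc
      exact ⟨t, Subtype.ext ht⟩
  let E : (Fin N ⊕ Fin N → Circle) ≃ₜ {c : H12 // Tset N lam mu c} :=
    Continuous.homeoOfEquivCompactToT2 (f := Equiv.ofBijective F hFb) hFc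
  let e : Fin (2 * N) ≃ Fin N ⊕ Fin N := Fintype.equivOfCardEq (by simp; ring)
  let E1 : (Fin (2 * N) → Circle) ≃ₜ (Fin N ⊕ Fin N → Circle) :=
    Homeomorph.piCongrLeft (Y := fun _ => Circle) e
  let E2 : (Fin (2 * N) → AddCircle (2 * Real.pi)) ≃ₜ (Fin (2 * N) → Circle) :=
    Homeomorph.piCongrRight fun _ => AddCircle.homeomorphCircle'
  exact ⟨E.symm.trans (E1.symm.trans E2.symm)⟩

end Model

/-- Given `λ_1 > μ_1 > … > λ_N > μ_N > 0`, the set of `c ∈ h^{1/2}` whose Hankel operator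
`Γ_c` has rank `N` with simple positive singular values exactly the `λ_j`, and whose shifted
Hankel operator `Γ̃_c` has rank `N` with simple positive singular values exactly the `μ_j`,
is homeomorphic to the torus `𝕋^{2N}`. -/
theorem statement2 (N : ℕ) (hN : 1 ≤ N) (lam mu : Fin N → ℝ)
    (h1 : ∀ j : Fin N, mu j < lam j)
    (h2 : ∀ j k : Fin N, (j : ℕ) + 1 = (k : ℕ) → lam k < mu j)
    (h3 : ∀ j : Fin N, 0 < mu j) :
    Nonempty (
      {c : H12 // ∃ Γ Γt : L2 →L[ℂ] L2,
          IsHankelOp c.1 Γ ∧ IsHankelOp (shiftSeq c.1) Γt ∧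
          HasSimpleSVals Γ N lam ∧ HasSimpleSVals Γt N mu}
        ≃ₜ (Fin (2 * N) → AddCircle (2 * Real.pi))) := by
  exact Model.main N hN lam mu h1 h2 h3

end
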